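/- arXiv:1910.02946 — 4 statements merged into one kernel-verified Lean document; each statement's English description precedes it below -/
import Mathlib

section
/- Let β_n > β_{n−1} > ⋯ > β_1 ≥ 0 be real numbers. Let β_* be the maximum of those β_j (j < n) for which β_n − β_j is not an integer, and set β_* = 0 if no such β_j exists. Then the intersection X_{β_1} ∩ ⋯ ∩ X_{β_n} equals the direct sum of the span of {t^{β_n−⌈β_n−β_*⌉}, …, t^{β_n−1}} and I^{β_n}(L¹[0,b]): every f in the intersection can be written in exactly one way as a linear combination of t^{β_n−⌈β_n−β_*⌉}, …, t^{β_n−1} plus a function in I^{β_n}(L¹[0,b]), and conversely every such sum lies in the intersection. In particular I^{β_n}(L¹[0,b]) ⊆ X_{β_1} ∩ ⋯ ∩ X_{β_n}, with codimension ⌈β_n − β_*⌉. -/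
open MeasureTheory Set Filter Topology

open Classical in
/-- Riemann–Liouville fractional integral of order `α` with base point `0`;
`RL 0` is the identity operator. -/
noncomputable def RL (α : ℝ) (f : ℝ → ℝ) : ℝ → ℝ := fun t =>
  if α = 0 then f t
  else (1 / Real.Gamma α) * ∫ s in (0:ℝ)..t, (t - s) ^ (α - 1) * f s

/-- `g ∈ AC[0,b]`: `g t = g 0 + ∫₀ᵗ φ` for some `φ ∈ L¹[0,b]`. -/
def MemAC (b : ℝ) (g : ℝ → ℝ) : Prop :=
  ∃ φ : ℝ → ℝ, IntegrableOn φ (Set.Icc 0 b) volume ∧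
    ∀ t ∈ Set.Icc (0:ℝ) b, g t = g 0 + ∫ s in (0:ℝ)..t, φ s

/-- `g ∈ AC^n[0,b]`: `g ∈ C^{n-1}[0,b]` and `D^{n-1} g ∈ AC[0,b]`. -/
def MemACn (b : ℝ) (n : ℕ) (g : ℝ → ℝ) : Prop :=
  ContDiffOn ℝ (n - 1 : ℕ) g (Set.Icc 0 b) ∧
    MemAC b (iteratedDerivWithin (n - 1) g (Set.Icc 0 b))

/-- `f ∈ X_α`, the space of functions with summable fractional derivative of order `α`:
`f ∈ L¹[0,b]` and (for `α ≠ 0`) `I^{⌈α⌉-α} f ∈ AC^{⌈α⌉}[0,b]`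
(as an element of `L¹`, i.e. it has an `AC^{⌈α⌉}` representative); `X_0 = L¹[0,b]`. -/
def MemX (b : ℝ) (α : ℝ) (f : ℝ → ℝ) : Prop :=
  IntegrableOn f (Set.Icc 0 b) volume ∧
    (α ≠ 0 → ∃ g : ℝ → ℝ,
      g =ᵐ[volume.restrict (Set.Icc 0 b)] RL ((⌈α⌉₊ : ℝ) - α) f ∧ MemACn b ⌈α⌉₊ g)

/-!
The operators `I^α` form an injective semigroup on `L¹[0,b]` and map `t ^ γ` to a positive multiple
of `t ^ (γ + α)`. Functions in `AC^m` are those of the form `c₀ + c₁ t + ⋯ + c_{m-1} t ^ (m - 1)`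
plus an element of `I^m (L¹)`, so inverting `I^(⌈α⌉ - α)` gives
`X_α = ⟨t ^ (α - ⌈α⌉), …, t ^ (α - 1)⟩ + I^α (L¹)`.

A power `t ^ γ` lies in `I^δ (L¹)` when `γ > δ - 1`, while the powers with `-1 < γ ≤ δ - 1` are
linearly independent modulo `I^δ (L¹)`: one more integration turns elements of `I^δ (L¹)` into
functions that are `o(t ^ δ)`. Let `δ < α`. If `α - δ` is an integer, this gives `X_α ⊆ X_δ`.
Otherwise no exponent of `X_α` is one of `X_δ`, and by modularity `X_α ∩ X_δ` keeps exactly the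
powers `t ^ (α - k)` with `k ≤ ⌈α - δ⌉`; the largest such `δ` is the most restrictive.
-/

open scoped NNReal Convolution

section RiemannLiouville

theorem integral_rpow_mul_sub_rpow {u v t : ℝ} (hu : 0 < u) (hv : 0 < v) (ht : 0 < t) :
    ∫ s in (0 : ℝ)..t, s ^ (u - 1) * (t - s) ^ (v - 1) =
      Real.Gamma u * Real.Gamma v / Real.Gamma (u + v) * t ^ (u + v - 1) := by
  have complex_integrand : ∀ s ∈ uIcc 0 t, ((s ^ (u - 1) * (t - s) ^ (v - 1) : ℝ) : ℂ) =
      (s : ℂ) ^ ((u : ℂ) - 1) * ((t : ℂ) - s) ^ ((v : ℂ) - 1) := by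
    intro s hs
    rw [uIcc_of_le ht.le] at hs
    push_cast [Complex.ofReal_cpow hs.1, Complex.ofReal_cpow (sub_nonneg.2 hs.2)]
    rfl
  apply Complex.ofReal_injective
  rw [← intervalIntegral.integral_ofReal, intervalIntegral.integral_congr complex_integrand,
    Complex.betaIntegral_scaled _ _ ht,
    Complex.betaIntegral_eq_Gamma_mul_div _ _ (by simpa) (by simpa)]
  push_cast [Complex.ofReal_cpow ht.le, ← Complex.Gamma_ofReal]
  ring

theorem RL_zero (f : ℝ → ℝ) : RL 0 f = f := by
  funext t
  simp [RL]

theorem RL_one (f : ℝ → ℝ) (t : ℝ) : RL 1 f t = ∫ s in (0 : ℝ)..t, f s := by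
  simp [RL]

theorem RL_const_mul (α c : ℝ) (f : ℝ → ℝ) (t : ℝ) :
    RL α (fun s => c * f s) t = c * RL α f t := by
  unfold RL
  split_ifs
  · rfl
  · simp_rw [mul_left_comm _ c, intervalIntegral.integral_const_mul]
    exact mul_left_comm _ _ _

theorem RL_rpow {α γ t : ℝ} (hα : 0 ≤ α) (hγ : -1 < γ) (ht : 0 < t) :
    RL α (fun s => s ^ γ) t = Real.Gamma (γ + 1) / Real.Gamma (γ + 1 + α) * t ^ (γ + α) := by
  rcases hα.eq_or_lt with rfl | hα
  · simp [RL_zero, (Real.Gamma_pos_of_pos (by linarith : 0 < γ + 1)).ne']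
  have beta := integral_rpow_mul_sub_rpow (by linarith : 0 < γ + 1) hα ht
  rw [add_sub_cancel_right, show γ + 1 + α - 1 = γ + α by ring] at beta
  have := (Real.Gamma_pos_of_pos hα).ne'
  simp_rw [RL, if_neg hα.ne', mul_comm _ (_ ^ γ), beta]
  field_simp

theorem ae_mem_Ioc_of_Icc (a b : ℝ) : ∀ᵐ t ∂volume.restrict (Icc a b), t ∈ Ioc a b := by
  rw [← Measure.restrict_congr_set Ioc_ae_eq_Icc]
  exact ae_restrict_mem measurableSet_Ioc

theorem integrableOn_Icc_rpow (b : ℝ) {γ : ℝ} (hγ : -1 < γ) :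
    IntegrableOn (fun t : ℝ => t ^ γ) (Icc 0 b) :=
  (integrableOn_Icc_iff_integrableOn_Ioc (by simp)).2
    (intervalIntegral.intervalIntegrable_rpow' hγ).1

theorem integrable_indicator_Ioc {b : ℝ} {f : ℝ → ℝ} (hf : IntegrableOn f (Icc 0 b)) :
    Integrable ((Ioc 0 b).indicator f) :=
  (integrable_indicator_iff measurableSet_Ioc).2 (hf.mono_set Ioc_subset_Icc_self)

theorem eqOn_indicator_Ioc_zero (b : ℝ) (f : ℝ → ℝ) :
    EqOn ((Ioc 0 b).indicator f) 0 (Iic 0) :=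
  fun _ ht => indicator_of_notMem (fun h => h.1.not_ge ht) f

theorem convolution_congr_of_causal {f f' g g' : ℝ → ℝ} {b : ℝ}
    (hf : EqOn f 0 (Iic 0)) (hf' : EqOn f' 0 (Iic 0)) (hg : EqOn g 0 (Iic 0))
    (hg' : EqOn g' 0 (Iic 0)) (hff' : EqOn f f' (Iic b)) (hgg' : EqOn g g' (Iic b)) :
    EqOn (f ⋆ g) (f' ⋆ g') (Iic b) := by
  intro t ht
  refine integral_congr_ae (Eventually.of_forall fun s => ?_)
  simp only [ContinuousLinearMap.lsmul_apply, smul_eq_mul]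
  rcases le_or_gt s 0 with hs | hs
  · simp [hf hs, hf' hs]
  rcases le_or_gt t s with hts | hts
  · simp [hg (sub_nonpos.2 hts : t - s ∈ Iic 0), hg' (sub_nonpos.2 hts : t - s ∈ Iic 0)]
  · rw [hff' (hts.le.trans ht : s ∈ Iic b),
      hgg' ((sub_le_self t hs.le).trans ht : t - s ∈ Iic b)]

theorem eqOn_convolution_zero_of_causal {f g : ℝ → ℝ} (hf : EqOn f 0 (Iic 0))
    (hg : EqOn g 0 (Iic 0)) : EqOn (f ⋆ g) 0 (Iic 0) := by
  have h := convolution_congr_of_causal hf (fun _ _ => rfl) hg (fun _ _ => rfl) hf hg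
  rwa [convolution_zero] at h

theorem ae_convolution_assoc {f g k : ℝ → ℝ} (hf : Integrable f) (hg : Integrable g)
    (hk : Integrable k) : (f ⋆ g) ⋆ k =ᵐ[volume] f ⋆ (g ⋆ k) := by
  filter_upwards [hf.norm.ae_convolution_exists (ContinuousLinearMap.mul ℝ ℝ)
    (hg.norm.integrable_convolution (ContinuousLinearMap.mul ℝ ℝ) hk.norm)] with t ht
  exact convolution_assoc _ _ _ _ (fun x y z => by simp [mul_assoc]) hf.1 hg.1 hk.1
    (hf.ae_convolution_exists _ hg) (hg.norm.ae_convolution_exists _ hk.norm) ht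

/-- The convolution kernel `t ^ (α - 1) / Γ(α)` of `RL α`, truncated to `(0, b]` so that it is
integrable on the whole line. -/
noncomputable def rlKernel (b α : ℝ) : ℝ → ℝ :=
  (Ioc 0 b).indicator fun t => (Real.Gamma α)⁻¹ * t ^ (α - 1)

theorem integrable_rlKernel (b : ℝ) {α : ℝ} (hα : 0 < α) : Integrable (rlKernel b α) :=
  integrable_indicator_Ioc ((integrableOn_Icc_rpow b (by linarith)).const_mul _)

theorem eqOn_rlKernel_zero (b α : ℝ) : EqOn (rlKernel b α) 0 (Iic 0) :=
  eqOn_indicator_Ioc_zero b _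

theorem indicator_mul_rlKernel {b α t : ℝ} (f : ℝ → ℝ) (ht : t ≤ b) (s : ℝ) :
    (Ioc 0 b).indicator f s * rlKernel b α (t - s) =
      (Ioo 0 t).indicator (fun s => (Real.Gamma α)⁻¹ * ((t - s) ^ (α - 1) * f s)) s := by
  unfold rlKernel
  by_cases hs : s ∈ Ioo 0 t
  · rw [indicator_of_mem hs, indicator_of_mem (show s ∈ Ioc 0 b from ⟨hs.1, hs.2.le.trans ht⟩),
      indicator_of_mem (show t - s ∈ Ioc 0 b by constructor <;> linarith [hs.1, hs.2])]
    ring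
  · rw [indicator_of_notMem hs]
    by_contra hne
    obtain ⟨hsb, hts⟩ := mul_ne_zero_iff.1 hne
    exact hs ⟨(mem_of_indicator_ne_zero hsb).1, sub_pos.1 (mem_of_indicator_ne_zero hts).1⟩

theorem RL_eq_convolution {b α t : ℝ} (hα : α ≠ 0) (f : ℝ → ℝ) (ht : t ∈ Ioc 0 b) :
    RL α f t = ((Ioc 0 b).indicator f ⋆ rlKernel b α) t := by
  simp only [convolution, ContinuousLinearMap.lsmul_apply, smul_eq_mul,
    indicator_mul_rlKernel f ht.2]
  rw [integral_indicator measurableSet_Ioo, ← integral_Ioc_eq_integral_Ioo,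
    ← intervalIntegral.integral_of_le ht.1.le, intervalIntegral.integral_const_mul, RL, if_neg hα,
    one_div]

theorem eqOn_indicator_RL_convolution (b : ℝ) {α : ℝ} (hα : α ≠ 0) (f : ℝ → ℝ) :
    EqOn ((Ioc 0 b).indicator (RL α f)) ((Ioc 0 b).indicator f ⋆ rlKernel b α) (Iic b) := by
  intro t htb
  rcases le_or_gt t 0 with ht | ht
  · rw [eqOn_indicator_Ioc_zero b _ ht, eqOn_convolution_zero_of_causal
      (eqOn_indicator_Ioc_zero b _) (eqOn_rlKernel_zero b α) ht]
  · rw [indicator_of_mem (show t ∈ Ioc 0 b from ⟨ht, htb⟩), RL_eq_convolution hα f ⟨ht, htb⟩]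

theorem eqOn_rlKernel_add {b u v : ℝ} (hu : 0 < u) (hv : 0 < v) :
    EqOn (rlKernel b u ⋆ rlKernel b v) (rlKernel b (u + v)) (Iic b) := by
  refine (eqOn_indicator_RL_convolution b hv.ne' _).symm.trans fun t _ => ?_
  refine congrFun (indicator_congr fun s hs => ?_) t
  have := (Real.Gamma_pos_of_pos hu).ne'
  rw [RL_const_mul, RL_rpow hv.le (by linarith) hs.1, sub_add_cancel, sub_add_eq_add_sub]
  field_simp

theorem RL_RL_ae {b u v : ℝ} (hu : 0 ≤ u) (hv : 0 ≤ v) {f : ℝ → ℝ}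
    (hf : IntegrableOn f (Icc 0 b)) :
    RL v (RL u f) =ᵐ[volume.restrict (Icc 0 b)] RL (u + v) f := by
  rcases hu.eq_or_lt with rfl | hu
  · simp [RL_zero]
  rcases hv.eq_or_lt with rfl | hv
  · simp [RL_zero]
  have hf₀ := eqOn_indicator_Ioc_zero b f
  have hk := eqOn_rlKernel_zero b
  filter_upwards [ae_mem_Ioc_of_Icc 0 b, ae_restrict_of_ae (ae_convolution_assoc
    (integrable_indicator_Ioc hf) (integrable_rlKernel b hu) (integrable_rlKernel b hv))]
    with t ht assoc
  calc RL v (RL u f) t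
      = ((Ioc 0 b).indicator (RL u f) ⋆ rlKernel b v) t := RL_eq_convolution hv.ne' _ ht
    _ = (((Ioc 0 b).indicator f ⋆ rlKernel b u) ⋆ rlKernel b v) t :=
        convolution_congr_of_causal (eqOn_indicator_Ioc_zero b _)
          (eqOn_convolution_zero_of_causal hf₀ (hk u)) (hk v) (hk v)
          (eqOn_indicator_RL_convolution b hu.ne' f) (eqOn_refl _ _) ht.2
    _ = ((Ioc 0 b).indicator f ⋆ (rlKernel b u ⋆ rlKernel b v)) t := assoc
    _ = ((Ioc 0 b).indicator f ⋆ rlKernel b (u + v)) t :=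
        convolution_congr_of_causal hf₀ hf₀
          (eqOn_convolution_zero_of_causal (hk u) (hk v)) (hk (u + v))
          (eqOn_refl _ _) (eqOn_rlKernel_add hu hv) ht.2
    _ = RL (u + v) f t := (RL_eq_convolution (add_pos hu hv).ne' f ht).symm

theorem RL_congr {b α : ℝ} (hα : α ≠ 0) {f g : ℝ → ℝ} (h : f =ᵐ[volume.restrict (Icc 0 b)] g) :
    EqOn (RL α f) (RL α g) (Icc 0 b) := by
  intro t ht
  rw [RL, RL, if_neg hα, if_neg hα]
  congr 1
  refine intervalIntegral.integral_congr_ae ?_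
  filter_upwards [(ae_restrict_iff' measurableSet_Icc).1 h] with s hfg hs
  rw [uIoc_of_le ht.1] at hs
  rw [hfg ⟨hs.1.le, hs.2.trans ht.2⟩]

theorem RL_congr_ae {b : ℝ} (α : ℝ) {f g : ℝ → ℝ} (h : f =ᵐ[volume.restrict (Icc 0 b)] g) :
    RL α f =ᵐ[volume.restrict (Icc 0 b)] RL α g := by
  rcases eq_or_ne α 0 with rfl | hα
  · rwa [RL_zero, RL_zero]
  · filter_upwards [ae_restrict_mem measurableSet_Icc] with t ht using RL_congr hα h ht

theorem integrableOn_RL {b α : ℝ} (hα : 0 ≤ α) {f : ℝ → ℝ} (hf : IntegrableOn f (Icc 0 b)) :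
    IntegrableOn (RL α f) (Icc 0 b) := by
  rcases hα.eq_or_lt with rfl | hα
  · rwa [RL_zero]
  rw [integrableOn_Icc_iff_integrableOn_Ioc]
  refine IntegrableOn.congr_fun (Integrable.integrableOn ?_)
    (fun t ht => (RL_eq_convolution hα.ne' f ht).symm) measurableSet_Ioc
  exact (integrable_indicator_Ioc hf).integrable_convolution _ (integrable_rlKernel b hα)

theorem RL_add_ae {b α : ℝ} (hα : 0 ≤ α) {f g : ℝ → ℝ} (hf : IntegrableOn f (Icc 0 b))
    (hg : IntegrableOn g (Icc 0 b)) :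
    RL α (f + g) =ᵐ[volume.restrict (Icc 0 b)] RL α f + RL α g := by
  rcases hα.eq_or_lt with rfl | hα
  · simp [RL_zero]
  have exists_ae {h : ℝ → ℝ} (hh : IntegrableOn h (Icc 0 b)) :
      ∀ᵐ t ∂volume.restrict (Icc 0 b), ConvolutionExistsAt ((Ioc 0 b).indicator h) (rlKernel b α) t
        (ContinuousLinearMap.lsmul ℝ ℝ) volume :=
    ae_restrict_of_ae ((integrable_indicator_Ioc hh).ae_convolution_exists _
      (integrable_rlKernel b hα))
  filter_upwards [ae_mem_Ioc_of_Icc 0 b, exists_ae hf, exists_ae hg] with t ht hft hgt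
  simp only [Pi.add_apply, RL_eq_convolution hα.ne' _ ht, indicator_add']
  exact hft.add_distrib hgt

end RiemannLiouville

section FractionalIntegralOnL1

/-- The space `L¹[0,b]`. -/
abbrev L1Icc (b : ℝ) : Type := ℝ →₁[volume.restrict (Icc 0 b)] ℝ

theorem integrableOn_coeFn {b : ℝ} (f : L1Icc b) : IntegrableOn f (Icc 0 b) :=
  L1.integrable_coeFn f

/-- The fractional integral `I^α` as a linear operator on `L¹[0,b]`. The order is taken in `ℝ≥0`,
which makes `α ↦ I^α` an additive semigroup of operators. -/
noncomputable def fracInt (b : ℝ) (α : ℝ≥0) : L1Icc b →ₗ[ℝ] L1Icc b where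
  toFun f := (integrableOn_RL α.coe_nonneg (integrableOn_coeFn f)).integrable.toL1
  map_add' f g := by
    rw [← Integrable.toL1_add, Integrable.toL1_eq_toL1_iff]
    exact (RL_congr_ae α (Lp.coeFn_add f g)).trans
      (RL_add_ae α.coe_nonneg (integrableOn_coeFn f) (integrableOn_coeFn g))
  map_smul' c f := by
    rw [RingHom.id_apply, ← Integrable.toL1_smul, Integrable.toL1_eq_toL1_iff]
    exact (RL_congr_ae α (Lp.coeFn_smul c f)).trans
      (Eventually.of_forall (RL_const_mul α c f))

variable {b : ℝ}

theorem coeFn_fracInt (α : ℝ≥0) (f : L1Icc b) :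
    fracInt b α f =ᵐ[volume.restrict (Icc 0 b)] RL α f :=
  (integrableOn_RL α.coe_nonneg (integrableOn_coeFn f)).integrable.coeFn_toL1

theorem fracInt_toL1 (α : ℝ≥0) {f : ℝ → ℝ} (hf : IntegrableOn f (Icc 0 b)) :
    fracInt b α hf.integrable.toL1 = (integrableOn_RL α.coe_nonneg hf).integrable.toL1 :=
  Lp.ext <| (coeFn_fracInt α _).trans <|
    (RL_congr_ae α hf.integrable.coeFn_toL1).trans (Integrable.coeFn_toL1 _).symm

theorem fracInt_zero : fracInt b 0 = LinearMap.id := by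
  ext1 f
  exact Lp.ext ((coeFn_fracInt 0 f).trans (by rw [NNReal.coe_zero, RL_zero]; rfl))

theorem fracInt_add (u v : ℝ≥0) : fracInt b (u + v) = fracInt b v ∘ₗ fracInt b u := by
  ext1 f
  refine Lp.ext ?_
  calc fracInt b (u + v) f
      =ᵐ[volume.restrict (Icc 0 b)] RL (u + v : ℝ≥0) f := coeFn_fracInt _ f
    _ =ᵐ[volume.restrict (Icc 0 b)] RL v (RL u f) :=
        (RL_RL_ae u.coe_nonneg v.coe_nonneg (integrableOn_coeFn f)).symm
    _ =ᵐ[volume.restrict (Icc 0 b)] RL v (fracInt b u f) :=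
        RL_congr_ae v (coeFn_fracInt u f).symm
    _ =ᵐ[volume.restrict (Icc 0 b)] fracInt b v (fracInt b u f) := (coeFn_fracInt v _).symm

theorem ae_eq_zero_of_ae_integral_eq_zero {a b : ℝ} (hab : a < b) {f : ℝ → ℝ}
    (hf : IntegrableOn f (Icc a b))
    (h : (fun t => ∫ s in a..t, f s) =ᵐ[volume.restrict (Icc a b)] 0) :
    f =ᵐ[volume.restrict (Icc a b)] 0 := by
  have continuousOn_primitive : ContinuousOn (fun t => ∫ s in a..t, f s) (Icc a b) := by
    rw [← uIcc_of_le hab.le] at hf ⊢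
    exact intervalIntegral.continuousOn_primitive_interval hf
  have primitive_zero : EqOn (fun t => ∫ s in a..t, f s) 0 (Icc a b) :=
    Measure.eqOn_Icc_of_ae_eq volume hab.ne h
      continuousOn_primitive continuousOn_const
  have deriv_ae := ((intervalIntegrable_iff_integrableOn_Icc_of_le hab.le).2
    hf).ae_hasDerivAt_integral
  rw [← Measure.restrict_congr_set Ioo_ae_eq_Icc]
  filter_upwards [ae_restrict_mem measurableSet_Ioo, ae_restrict_of_ae deriv_ae] with t ht hderiv
  rw [uIcc_of_le hab.le] at hderiv
  have primitive_zero_near : (fun t => ∫ s in a..t, f s) =ᶠ[𝓝 t] 0 := by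
    filter_upwards [Icc_mem_nhds ht.1 ht.2] with x hx using primitive_zero hx
  exact ((hderiv (Ioo_subset_Icc_self ht) a (left_mem_Icc.2 hab.le)).congr_of_eventuallyEq
    primitive_zero_near.symm).unique (hasDerivAt_const t 0)

theorem fracInt_one_injective (hb : 0 < b) : Function.Injective (fracInt b 1) := by
  refine (injective_iff_map_eq_zero _).2 fun f hf => Lp.eq_zero_iff_ae_eq_zero.2 ?_
  refine ae_eq_zero_of_ae_integral_eq_zero hb (integrableOn_coeFn f) ?_
  filter_upwards [coeFn_fracInt 1 f, Lp.eq_zero_iff_ae_eq_zero.1 hf] with t hRL hzero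
  rw [← RL_one, ← NNReal.coe_one, ← hRL, hzero]

theorem fracInt_injective (hb : 0 < b) (α : ℝ≥0) : Function.Injective (fracInt b α) := by
  have natCast_injective (m : ℕ) : Function.Injective (fracInt b m) := by
    induction m with
    | zero => simpa [fracInt_zero] using Function.injective_id
    | succ m ih =>
      rw [Nat.cast_succ, fracInt_add]
      exact (fracInt_one_injective hb).comp ih
  obtain ⟨δ, hδ⟩ := exists_add_of_le (Nat.le_ceil α)
  have := natCast_injective ⌈α⌉₊
  rw [hδ, fracInt_add, LinearMap.coe_comp] at this
  exact this.of_comp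

theorem range_fracInt_anti {δ α : ℝ≥0} (h : δ ≤ α) :
    LinearMap.range (fracInt b α) ≤ LinearMap.range (fracInt b δ) := by
  obtain ⟨c, rfl⟩ := exists_add_of_le h
  rw [add_comm, fracInt_add]
  exact LinearMap.range_comp_le_range _ _

end FractionalIntegralOnL1

section PowerFunctions

/-- The power function `t ↦ t ^ γ` as an element of `L¹[0,b]`, with the junk value `0` when
`γ ≤ -1`, where it is not integrable. -/
noncomputable def rpowL1 (b γ : ℝ) : L1Icc b :=
  if hγ : -1 < γ then (integrableOn_Icc_rpow b hγ).integrable.toL1 else 0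

/-- The span in `L¹[0,b]` of the powers `t ^ γ` with exponents `γ ∈ s`. -/
noncomputable def powerSpan (b : ℝ) (s : Set ℝ) : Submodule ℝ (L1Icc b) :=
  Submodule.span ℝ (rpowL1 b '' s)

variable {b : ℝ}

theorem coeFn_rpowL1 {γ : ℝ} (hγ : -1 < γ) :
    rpowL1 b γ =ᵐ[volume.restrict (Icc 0 b)] fun t => t ^ γ := by
  rw [rpowL1, dif_pos hγ]
  exact (integrableOn_Icc_rpow b hγ).integrable.coeFn_toL1

theorem Gamma_ratio_pos {γ : ℝ} (hγ : -1 < γ) (α : ℝ≥0) :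
    0 < Real.Gamma (γ + 1) / Real.Gamma (γ + 1 + α) :=
  have hγ' : 0 < γ + 1 := by linarith
  div_pos (Real.Gamma_pos_of_pos hγ') (Real.Gamma_pos_of_pos (add_pos_of_pos_of_nonneg hγ' α.2))

theorem fracInt_rpowL1 {γ : ℝ} (hγ : -1 < γ) (α : ℝ≥0) :
    fracInt b α (rpowL1 b γ) =
      (Real.Gamma (γ + 1) / Real.Gamma (γ + 1 + α)) • rpowL1 b (γ + α) := by
  have hγα : -1 < γ + α := lt_add_of_lt_of_nonneg hγ α.2
  refine Lp.ext ?_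
  filter_upwards [coeFn_fracInt α (rpowL1 b γ), RL_congr_ae α (coeFn_rpowL1 hγ),
    Lp.coeFn_smul (Real.Gamma (γ + 1) / Real.Gamma (γ + 1 + α)) (rpowL1 b (γ + α)),
    coeFn_rpowL1 hγα, ae_mem_Ioc_of_Icc 0 b] with t hint hRL hsmul hpow ht
  rw [hint, hRL, hsmul, RL_rpow α.coe_nonneg hγ ht.1, Pi.smul_apply, hpow, smul_eq_mul]

theorem map_powerSpan {s : Set ℝ} (hs : s ⊆ Ioi (-1)) (α : ℝ≥0) :
    (powerSpan b s).map (fracInt b α) = powerSpan b ((· + (α : ℝ)) '' s) := by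
  unfold powerSpan
  rw [Submodule.map_span, image_image, image_image]
  apply Submodule.span_eq_span <;> rintro _ ⟨γ, hγ, rfl⟩
  · dsimp only
    rw [fracInt_rpowL1 (hs hγ)]
    exact Submodule.smul_mem _ _ (Submodule.subset_span (mem_image_of_mem _ hγ))
  · refine (Submodule.smul_mem_iff _ (Gamma_ratio_pos (hs hγ) α).ne').1 ?_
    rw [← fracInt_rpowL1 (hs hγ)]
    exact Submodule.subset_span (mem_image_of_mem _ hγ)

theorem powerSpan_mono {s t : Set ℝ} (h : s ⊆ t) : powerSpan b s ≤ powerSpan b t :=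
  Submodule.span_mono (image_mono h)

theorem powerSpan_union (s t : Set ℝ) :
    powerSpan b (s ∪ t) = powerSpan b s ⊔ powerSpan b t := by
  rw [powerSpan, image_union, Submodule.span_union, powerSpan, powerSpan]

theorem powerSpan_le_range {s : Set ℝ} {δ : ℝ≥0} (hs : s ⊆ Ioi (δ - 1 : ℝ)) :
    powerSpan b s ≤ LinearMap.range (fracInt b δ) := by
  have shifted : (· + -(δ : ℝ)) '' s ⊆ Ioi (-1) := by
    rintro _ ⟨γ, hγ, rfl⟩
    have := hs hγ
    simp only [mem_Ioi] at this ⊢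
    linarith
  have := map_powerSpan (b := b) shifted δ
  rw [image_image] at this
  simp only [neg_add_cancel_right, image_id'] at this
  rw [← this]
  exact LinearMap.map_le_range

end PowerFunctions

section Independence

open Asymptotics

theorem isLittleO_rpow_nhdsGT_zero {γ γ' : ℝ} (h : γ < γ') :
    (fun t : ℝ => t ^ γ') =o[𝓝[>] 0] fun t => t ^ γ := by
  have tendsto_diff : Tendsto (fun t : ℝ => t ^ (γ' - γ)) (𝓝[>] 0) (𝓝 0) := by
    have := Real.continuousAt_rpow_const 0 (γ' - γ) (Or.inr (sub_nonneg.2 h.le))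
    rw [ContinuousAt, Real.zero_rpow (sub_pos.2 h).ne'] at this
    exact this.mono_left nhdsWithin_le_nhds
  refine (((isLittleO_one_iff ℝ).2 tendsto_diff).mul_isBigO
    (isBigO_refl (fun t : ℝ => t ^ γ) _)).congr' ?_ (by simp)
  filter_upwards [self_mem_nhdsWithin] with t ht
  rw [← Real.rpow_add ht, sub_add_cancel]

theorem isBigO_rpow_nhdsGT_zero {γ γ' : ℝ} (h : γ ≤ γ') :
    (fun t : ℝ => t ^ γ') =O[𝓝[>] 0] fun t => t ^ γ := by
  rcases h.eq_or_lt with rfl | h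
  · exact isBigO_refl _ _
  · exact (isLittleO_rpow_nhdsGT_zero h).isBigO

theorem forall_eq_zero_of_sum_rpow_isLittleO {l : Filter ℝ} [l.NeBot] (hl : l ≤ 𝓝[>] 0)
    {δ : ℝ} (c : ℝ → ℝ) {s : Finset ℝ} (hs : ∀ γ ∈ s, γ ≤ δ)
    (h : (fun t => ∑ γ ∈ s, c γ * t ^ γ) =o[l] fun t => t ^ δ) : ∀ γ ∈ s, c γ = 0 := by
  induction s using Finset.induction_on_min with
  | empty => simp
  | insert γ₀ s hmin ih =>
    have hγ₀ : γ₀ ∉ s := fun hmem => (hmin γ₀ hmem).false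
    simp only [Finset.sum_insert hγ₀] at h
    have tail : (fun t => ∑ γ ∈ s, c γ * t ^ γ) =o[l] fun t => t ^ γ₀ :=
      IsLittleO.fun_sum fun γ hγ =>
        ((isLittleO_rpow_nhdsGT_zero (hmin γ hγ)).mono hl).const_mul_left _
    have leading : (fun t => c γ₀ * t ^ γ₀) =o[l] fun t => t ^ γ₀ := by
      simpa using (h.trans_isBigO
        ((isBigO_rpow_nhdsGT_zero (hs γ₀ (Finset.mem_insert_self _ _))).mono hl)).sub tail
    have leading_coeff : c γ₀ = 0 := by
      by_contra hne
      refine isLittleO_irrefl ?_ ((isLittleO_const_mul_left_iff hne).1 leading)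
      refine Eventually.frequently (hl ?_)
      filter_upwards [self_mem_nhdsWithin] with t ht using (Real.rpow_pos_of_pos ht γ₀).ne'
    simp only [leading_coeff, zero_mul, zero_add] at h
    exact Finset.forall_mem_insert .. |>.2
      ⟨leading_coeff, ih (fun γ hγ => hs γ (Finset.mem_insert_of_mem hγ)) h⟩

variable {b : ℝ}

theorem abs_RL_le {α t : ℝ} (hα : 1 ≤ α) {f : ℝ → ℝ} (hf : IntegrableOn f (Icc 0 b))
    (ht : t ∈ Ioc 0 b) :
    |RL α f t| ≤ (Real.Gamma α)⁻¹ * (t ^ (α - 1) * ∫ s in (0 : ℝ)..t, |f s|) := by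
  have hΓ := Real.Gamma_pos_of_pos (zero_lt_one.trans_le hα)
  have hft : IntervalIntegrable f volume 0 t :=
    (intervalIntegrable_iff_integrableOn_Icc_of_le ht.1.le).2
      (hf.mono_set (Icc_subset_Icc_right ht.2))
  rw [RL, if_neg (zero_lt_one.trans_le hα).ne', abs_mul, one_div, abs_of_pos (inv_pos.2 hΓ),
    ← intervalIntegral.integral_const_mul]
  gcongr
  rw [← Real.norm_eq_abs]
  refine intervalIntegral.norm_integral_le_of_norm_le ht.1.le (Eventually.of_forall ?_)
    (hft.abs.const_mul _)
  intro s hs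
  rw [Real.norm_eq_abs, abs_mul, abs_of_nonneg (Real.rpow_nonneg (sub_nonneg.2 hs.2) _)]
  gcongr
  · exact sub_nonneg.2 hs.2
  exact sub_le_self t hs.1.le

theorem tendsto_primitive_nhdsGT {a b : ℝ} (hab : a < b) {f : ℝ → ℝ}
    (hf : IntegrableOn f (Icc a b)) :
    Tendsto (fun t => ∫ s in a..t, f s) (𝓝[>] a) (𝓝 0) := by
  rw [← uIcc_of_le hab.le] at hf
  have := intervalIntegral.continuousOn_primitive_interval hf a left_mem_uIcc
  rw [ContinuousWithinAt, intervalIntegral.integral_same, uIcc_of_le hab.le] at this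
  rw [← nhdsWithin_Ioc_eq_nhdsGT hab]
  exact this.mono_left (nhdsWithin_mono _ Ioc_subset_Icc_self)

theorem RL_isLittleO_rpow (hb : 0 < b) {α : ℝ} (hα : 1 ≤ α) {f : ℝ → ℝ}
    (hf : IntegrableOn f (Icc 0 b)) : RL α f =o[𝓝[>] 0] fun t => t ^ (α - 1) := by
  have bound : RL α f =O[𝓝[>] 0] fun t => t ^ (α - 1) * ∫ s in (0 : ℝ)..t, |f s| := by
    refine IsBigO.of_bound (Real.Gamma α)⁻¹ ?_
    filter_upwards [Ioc_mem_nhdsGT hb] with t ht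
    exact (abs_RL_le hα hf ht).trans (by gcongr; exact le_abs_self _)
  refine bound.trans_isLittleO ?_
  simpa using (isBigO_refl (fun t : ℝ => t ^ (α - 1)) (𝓝[>] 0)).mul_isLittleO
    ((isLittleO_one_iff ℝ).2 (tendsto_primitive_nhdsGT hb hf.abs))

theorem ae_restrict_inf_nhdsGT_neBot {a b : ℝ} (hab : a < b) :
    (ae (volume.restrict (Icc a b)) ⊓ 𝓝[>] a).NeBot := by
  refine inf_neBot_iff.2 fun {s} hs {u} hu => ?_
  obtain ⟨c, hc, hcu⟩ := mem_nhdsGT_iff_exists_Ioo_subset.1 (inter_mem hu (Ioo_mem_nhdsGT hab))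
  by_contra hempty
  have subset_compl : Ioo a c ⊆ sᶜ := fun x hx hxs => hempty ⟨x, hxs, (hcu hx).1⟩
  have null : volume.restrict (Icc a b) (Ioo a c) = 0 := measure_mono_null subset_compl hs
  rw [Measure.restrict_apply measurableSet_Ioo,
    inter_eq_left.2 fun x hx => Ioo_subset_Icc_self (hcu hx).2, Real.volume_Ioo,
    ENNReal.ofReal_eq_zero] at null
  exact (sub_pos.2 hc).not_ge null

theorem coeFn_sum_smul_rpowL1 {ι : Type*} (s : Finset ι) {γ : ι → ℝ} (hγ : ∀ i ∈ s, -1 < γ i)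
    (c : ι → ℝ) :
    ⇑(∑ i ∈ s, c i • rpowL1 b (γ i)) =ᵐ[volume.restrict (Icc 0 b)]
      fun t => ∑ i ∈ s, c i * t ^ γ i := by
  filter_upwards [Lp.coeFn_fun_finsetSum s fun i => c i • rpowL1 b (γ i),
    (eventually_all_finset s).2 fun i _ => Lp.coeFn_smul (c i) (rpowL1 b (γ i)),
    (eventually_all_finset s).2 fun i hi => coeFn_rpowL1 (b := b) (hγ i hi)] with t hsum hsmul hpow
  rw [hsum]
  refine Finset.sum_congr rfl fun i hi => ?_
  rw [hsmul i hi, Pi.smul_apply, hpow i hi, smul_eq_mul]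

theorem sum_smul_rpowL1_isLittleO (hb : 0 < b) {α : ℝ≥0} (hα : 1 ≤ α) {ι : Type*} {s : Finset ι}
    {γ : ι → ℝ} (hγ : ∀ i ∈ s, -1 < γ i) {c : ι → ℝ}
    (h : ∑ i ∈ s, c i • rpowL1 b (γ i) ∈ LinearMap.range (fracInt b α)) :
    (fun t => ∑ i ∈ s, c i * t ^ γ i)
      =o[ae (volume.restrict (Icc 0 b)) ⊓ 𝓝[>] 0] fun t => t ^ (α - 1 : ℝ) := by
  obtain ⟨g, hg⟩ := h
  refine ((RL_isLittleO_rpow hb (NNReal.one_le_coe.2 hα) (integrableOn_coeFn g)).mono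
    inf_le_right).congr' (Eventually.filter_mono inf_le_left ?_) EventuallyEq.rfl
  filter_upwards [coeFn_fracInt α g, coeFn_sum_smul_rpowL1 (b := b) s hγ c] with t hRL hsum
  rw [← hRL, hg, hsum]

theorem fracInt_sum_smul_rpowL1 (α : ℝ≥0) {s : Finset ℝ} (hs : ∀ γ ∈ s, -1 < γ) (c : ℝ → ℝ) :
    fracInt b α (∑ γ ∈ s, c γ • rpowL1 b γ) =
      ∑ γ ∈ s, (c γ * (Real.Gamma (γ + 1) / Real.Gamma (γ + 1 + α))) • rpowL1 b (γ + α) := by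
  rw [map_sum]
  refine Finset.sum_congr rfl fun γ hγ => ?_
  rw [map_smul, fracInt_rpowL1 (hs γ hγ), smul_smul]

-- One further integration is needed since elements of `range (fracInt b δ)` have no pointwise
-- bounds for `δ < 1`, whereas `RL (δ + 1) g t = o(t ^ δ)`.
theorem forall_eq_zero_of_sum_smul_rpowL1_mem_range (hb : 0 < b) (δ : ℝ≥0) {s : Finset ℝ}
    (hs : ↑s ⊆ Ioc (-1) (δ - 1 : ℝ)) {c : ℝ → ℝ}
    (h : ∑ γ ∈ s, c γ • rpowL1 b γ ∈ LinearMap.range (fracInt b δ)) : ∀ γ ∈ s, c γ = 0 := by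
  have hs' : ∀ γ ∈ s, -1 < γ := fun γ hγ => (hs hγ).1
  let d : ℝ → ℝ := fun γ => c γ * (Real.Gamma (γ + 1) / Real.Gamma (γ + 1 + (1 : ℝ≥0)))
  have integrated_mem_range :
      ∑ γ ∈ s, d γ • rpowL1 b (γ + (1 : ℝ≥0)) ∈ LinearMap.range (fracInt b (δ + 1)) := by
    rw [← fracInt_sum_smul_rpowL1 1 hs', fracInt_add, LinearMap.range_comp]
    exact Submodule.mem_map_of_mem h
  have integrated_isLittleO := sum_smul_rpowL1_isLittleO hb le_add_self
    (fun γ hγ => lt_add_of_lt_of_nonneg (hs' γ hγ) NNReal.zero_le_coe) integrated_mem_range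
  have := ae_restrict_inf_nhdsGT_neBot hb
  have isLittleO : (fun t => ∑ γ ∈ s, d γ * t ^ γ)
      =o[ae (volume.restrict (Icc 0 b)) ⊓ 𝓝[>] 0] fun t => t ^ (δ - 1 : ℝ) := by
    refine ((isBigO_refl (fun t : ℝ => t⁻¹) _).mul_isLittleO integrated_isLittleO).congr'
      (Eventually.filter_mono inf_le_right ?_) (Eventually.filter_mono inf_le_right ?_) <;>
      filter_upwards [self_mem_nhdsWithin] with t (ht : 0 < t)
    · rw [Finset.mul_sum]
      refine Finset.sum_congr rfl fun γ _ => ?_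
      rw [NNReal.coe_one, Real.rpow_add_one ht.ne']
      field_simp
    · rw [NNReal.coe_add, NNReal.coe_one, add_sub_cancel_right, Real.rpow_sub_one ht.ne',
        div_eq_inv_mul]
  intro γ hγ
  exact (mul_eq_zero_iff_right (Gamma_ratio_pos (hs' γ hγ) 1).ne').1
    (forall_eq_zero_of_sum_rpow_isLittleO inf_le_right d (fun γ hγ => (hs hγ).2) isLittleO γ hγ)

theorem linearIndepOn_mkQ_rpowL1 (hb : 0 < b) (δ : ℝ≥0) :
    LinearIndepOn ℝ ((LinearMap.range (fracInt b δ)).mkQ ∘ rpowL1 b) (Ioc (-1) (δ - 1 : ℝ)) := by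
  refine linearIndepOn_iff'.2 fun s c hs h => ?_
  refine forall_eq_zero_of_sum_smul_rpowL1_mem_range hb δ hs ?_
  rw [← Submodule.Quotient.mk_eq_zero, ← Submodule.mkQ_apply, map_sum]
  simpa only [map_smul, Function.comp_apply] using h

theorem disjoint_powerSpan_sup_range (hb : 0 < b) {δ : ℝ≥0} {s t : Set ℝ}
    (hs : s ⊆ Ioc (-1) (δ - 1 : ℝ)) (ht : t ⊆ Ioc (-1) (δ - 1 : ℝ)) (hst : Disjoint s t) :
    Disjoint (powerSpan b s) (powerSpan b t ⊔ LinearMap.range (fracInt b δ)) := by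
  have independent := (linearIndepOn_mkQ_rpowL1 hb δ).mono (union_subset hs ht)
  rw [linearIndepOn_union_iff hst, image_comp, image_comp, ← Submodule.map_span,
    ← Submodule.map_span] at independent
  have disjoint_range : Disjoint (powerSpan b s) (LinearMap.range (fracInt b δ)) := by
    have := Submodule.range_ker_disjoint independent.1
    rwa [Submodule.ker_mkQ, ← image_eq_range] at this
  refine Submodule.disjoint_def.2 fun x hxs hx => disjoint_range.le_bot ⟨hxs, ?_⟩
  obtain ⟨y, hy, r, hr, rfl⟩ := Submodule.mem_sup.1 hx
  rw [SetLike.mem_coe, ← Submodule.ker_mkQ (LinearMap.range _), LinearMap.mem_ker]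
  refine Submodule.disjoint_def.1 independent.2.2 _ (Submodule.mem_map_of_mem hxs) ?_
  rw [map_add, (LinearMap.range _).mkQ_apply r, (Submodule.Quotient.mk_eq_zero _).2 hr, add_zero]
  exact Submodule.mem_map_of_mem hy

end Independence

section TaylorSpace

/-- The exponents `α - 1, …, α - N` of the singular part of a fractional Taylor expansion of
order `α`. -/
def taylorExponents (α : ℝ) (N : ℕ) : Set ℝ := (fun k : ℕ => α - k) '' Icc 1 N

/-- The functions in `L¹[0,b]` with a fractional Taylor expansion of order `α` having `N` singular
terms, that is, the linear combinations of `t ^ (α - 1), …, t ^ (α - N)` up to `I^α (L¹[0,b])`. -/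
noncomputable def taylorSpace (b : ℝ) (α : ℝ≥0) (N : ℕ) : Submodule ℝ (L1Icc b) :=
  powerSpan b (taylorExponents α N) ⊔ LinearMap.range (fracInt b α)

theorem taylorExponents_mono (α : ℝ) : Monotone (taylorExponents α) :=
  fun _ _ h => image_mono (Icc_subset_Icc_right h)

theorem taylorExponents_subset_Ioi {α c : ℝ} {N : ℕ} (h : c + N < α) :
    taylorExponents α N ⊆ Ioi c := by
  rintro _ ⟨k, hk, rfl⟩
  have : (k : ℝ) ≤ N := Nat.cast_le.2 hk.2
  rw [mem_Ioi]
  linarith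

theorem taylorExponents_subset_Ioc {α : ℝ} {N : ℕ} (h : N < α + 1) :
    taylorExponents α N ⊆ Ioc (-1) (α - 1) := by
  refine fun γ hγ => ⟨taylorExponents_subset_Ioi (by linarith) hγ, ?_⟩
  obtain ⟨k, hk, rfl⟩ := hγ
  exact sub_le_sub_left (Nat.one_le_cast.2 hk.1) α

theorem taylorExponents_succ (α : ℝ) (N : ℕ) :
    taylorExponents α (N + 1) = {α - (N + 1 : ℕ)} ∪ taylorExponents α N := by
  rw [taylorExponents, taylorExponents, ← insert_Icc_right_eq_Icc_add_one (Nat.le_add_left 1 N),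
    image_insert_eq, singleton_union]

theorem image_add_taylorExponents (α c : ℝ) (N : ℕ) :
    (· + c) '' taylorExponents α N = taylorExponents (α + c) N := by
  rw [taylorExponents, taylorExponents, image_image]
  exact image_congr fun k _ => sub_add_eq_add_sub α k c

variable {b : ℝ}

theorem taylorSpace_mono (α : ℝ≥0) : Monotone (taylorSpace b α) :=
  fun _ _ h => sup_le_sup_right (powerSpan_mono (taylorExponents_mono α h)) _

theorem taylorSpace_zero_zero : taylorSpace b 0 0 = ⊤ := by
  rw [taylorSpace, fracInt_zero, LinearMap.range_id, sup_top_eq]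

theorem taylorSpace_succ (α : ℝ≥0) (N : ℕ) :
    taylorSpace b α (N + 1) = powerSpan b {(α - (N + 1 : ℕ) : ℝ)} ⊔ taylorSpace b α N := by
  rw [taylorSpace, taylorExponents_succ, powerSpan_union, sup_assoc, taylorSpace]

theorem map_taylorSpace {α : ℝ≥0} {N : ℕ} (h : (N : ℝ) < α + 1) (v : ℝ≥0) :
    (taylorSpace b α N).map (fracInt b v) = taylorSpace b (α + v) N := by
  rw [taylorSpace, Submodule.map_sup, map_powerSpan fun _ hγ => (taylorExponents_subset_Ioc h hγ).1,
    image_add_taylorExponents, ← LinearMap.range_comp, ← fracInt_add, taylorSpace, NNReal.coe_add]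

end TaylorSpace

section AbsolutelyContinuous

/-- `G` is an `m`-fold iterated primitive on `[0,b]` of an integrable function, up to adding a
constant at each stage. For `m ≥ 1` this is membership in `AC^m[0,b]`, and for `m = 0` it is
membership in `L¹[0,b]`. -/
def IteratedPrimitive (b : ℝ) : ℕ → (ℝ → ℝ) → Prop
  | 0, G => IntegrableOn G (Icc 0 b)
  | m + 1, G => ∃ G', IteratedPrimitive b m G' ∧
      ∀ t ∈ Icc 0 b, G t = G 0 + ∫ s in (0 : ℝ)..t, G' s

variable {b : ℝ}

theorem continuousOn_of_eqOn_primitive {c : ℝ} {G φ : ℝ → ℝ} (hφ : IntegrableOn φ (Icc 0 b))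
    (h : ∀ t ∈ Icc 0 b, G t = c + ∫ s in (0 : ℝ)..t, φ s) : ContinuousOn G (Icc 0 b) := by
  rcases le_or_gt 0 b with hb | hb
  · have continuousOn_primitive : ContinuousOn (fun t => ∫ s in (0 : ℝ)..t, φ s) (Icc 0 b) := by
      rw [← uIcc_of_le hb] at hφ ⊢
      exact intervalIntegral.continuousOn_primitive_interval hφ
    exact (continuousOn_const.add continuousOn_primitive).congr h
  · rw [Icc_eq_empty hb.not_ge]
    exact continuousOn_empty G

theorem IteratedPrimitive.integrableOn {m : ℕ} {G : ℝ → ℝ} (h : IteratedPrimitive b m G) :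
    IntegrableOn G (Icc 0 b) := by
  induction m generalizing G with
  | zero => exact h
  | succ m ih =>
    obtain ⟨G', hG', hG⟩ := h
    exact (continuousOn_of_eqOn_primitive (ih hG') hG).integrableOn_compact isCompact_Icc

theorem MemAC.congr {f g : ℝ → ℝ} (hf : MemAC b f) (h : EqOn f g (Icc 0 b)) : MemAC b g := by
  obtain ⟨φ, hφ, hf⟩ := hf
  refine ⟨φ, hφ, fun t ht => ?_⟩
  rw [← h ht, ← h ⟨le_rfl, ht.1.trans ht.2⟩, hf t ht]

theorem eq_add_integral_derivWithin {G : ℝ → ℝ} (hG : DifferentiableOn ℝ G (Icc 0 b))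
    (hG' : ContinuousOn (derivWithin G (Icc 0 b)) (Icc 0 b)) {t : ℝ} (ht : t ∈ Icc 0 b) :
    G t = G 0 + ∫ s in (0 : ℝ)..t, derivWithin G (Icc 0 b) s := by
  have hsub : Icc 0 t ⊆ Icc 0 b := Icc_subset_Icc_right ht.2
  have hasDerivAt (x : ℝ) (hx : x ∈ Ioo 0 t) : HasDerivAt G (derivWithin G (Icc 0 b) x) x :=
    (hG x (hsub (Ioo_subset_Icc_self hx))).hasDerivWithinAt.hasDerivAt
      (Icc_mem_nhds hx.1 (hx.2.trans_le ht.2))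
  rw [intervalIntegral.integral_eq_sub_of_hasDerivAt_of_le ht.1 (hG.continuousOn.mono hsub)
    hasDerivAt ((hG'.mono hsub).intervalIntegrable_of_Icc ht.1), add_sub_cancel]

theorem hasDerivWithinAt_of_eqOn_primitive {c : ℝ} {G φ : ℝ → ℝ} (hφ : ContinuousOn φ (Icc 0 b))
    (h : ∀ t ∈ Icc 0 b, G t = c + ∫ s in (0 : ℝ)..t, φ s) {t : ℝ} (ht : t ∈ Icc 0 b) :
    HasDerivWithinAt G (φ t) (Icc 0 b) t := by
  have : Fact (t ∈ Icc 0 b) := ⟨ht⟩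
  have hsub : Icc 0 t ⊆ Icc 0 b := Icc_subset_Icc_right ht.2
  refine HasDerivWithinAt.congr ?_ h (h t ht)
  exact (intervalIntegral.integral_hasDerivWithinAt_right
    ((hφ.mono hsub).intervalIntegrable_of_Icc ht.1)
    (hφ.stronglyMeasurableAtFilter_nhdsWithin measurableSet_Icc t) (hφ t ht)).const_add c

theorem memACn_succ_succ_iff (hb : 0 < b) {m : ℕ} {G : ℝ → ℝ} :
    MemACn b (m + 2) G ↔ DifferentiableOn ℝ G (Icc 0 b) ∧
      MemACn b (m + 1) (derivWithin G (Icc 0 b)) := by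
  simp only [MemACn, Nat.add_sub_cancel, Nat.reduceSubDiff, Nat.cast_succ,
    contDiffOn_succ_iff_derivWithin (uniqueDiffOn_Icc hb), iteratedDerivWithin_succ', and_assoc]
  simp

theorem MemACn.congr {m : ℕ} {f g : ℝ → ℝ} (hf : MemACn b m f)
    (h : EqOn f g (Icc 0 b)) : MemACn b m g :=
  ⟨hf.1.congr h.symm, hf.2.congr fun _ ht => iteratedDerivWithin_congr h ht⟩

theorem memACn_succ_iff_iteratedPrimitive (hb : 0 < b) {m : ℕ} {G : ℝ → ℝ} :
    MemACn b (m + 1) G ↔ IteratedPrimitive b (m + 1) G := by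
  induction m generalizing G with
  | zero =>
    simp only [MemACn, zero_add, Nat.sub_self, Nat.cast_zero, contDiffOn_zero,
      iteratedDerivWithin_zero]
    exact and_iff_right_of_imp fun ⟨φ, hφ, hG⟩ => continuousOn_of_eqOn_primitive hφ hG
  | succ m ih =>
    rw [memACn_succ_succ_iff hb]
    constructor
    · rintro ⟨hG, hG'⟩
      exact ⟨_, ih.1 hG', fun t => eq_add_integral_derivWithin hG hG'.1.continuousOn⟩
    · rintro ⟨G', hG', hG⟩
      have hG'AC := ih.2 hG'
      have hasDeriv := fun t => hasDerivWithinAt_of_eqOn_primitive (t := t)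
        hG'AC.1.continuousOn hG
      refine ⟨fun t ht => (hasDeriv t ht).differentiableWithinAt, hG'AC.congr fun t ht => ?_⟩
      exact ((hasDeriv t ht).derivWithin (uniqueDiffOn_Icc hb t ht)).symm

theorem mem_powerSpan_zero_sup_map_fracInt_one {S : Submodule ℝ (L1Icc b)} {F : L1Icc b} :
    F ∈ powerSpan b {0} ⊔ S.map (fracInt b 1) ↔ ∃ c : ℝ, ∃ F' ∈ S,
      F =ᵐ[volume.restrict (Icc 0 b)] fun t => c + ∫ s in (0 : ℝ)..t, F' s := by
  have coeFn_add (c : ℝ) (F' : L1Icc b) : ⇑(c • rpowL1 b 0 + fracInt b 1 F')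
      =ᵐ[volume.restrict (Icc 0 b)] fun t => c + ∫ s in (0 : ℝ)..t, F' s := by
    filter_upwards [Lp.coeFn_add (c • rpowL1 b 0) (fracInt b 1 F'), Lp.coeFn_smul c (rpowL1 b 0),
      coeFn_rpowL1 (b := b) neg_one_lt_zero, coeFn_fracInt 1 F'] with t hadd hsmul hpow hint
    rw [hadd, Pi.add_apply, hsmul, Pi.smul_apply, hpow, hint, NNReal.coe_one, RL_one,
      Real.rpow_zero, smul_eq_mul, mul_one]
  simp only [powerSpan, image_singleton, Submodule.mem_sup, Submodule.mem_span_singleton,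
    Submodule.mem_map, exists_exists_eq_and, exists_exists_and_eq_and]
  refine exists_congr fun c => exists_congr fun F' => and_congr_right fun _ => ?_
  exact ⟨fun h => h ▸ coeFn_add c F', fun h => Lp.ext ((coeFn_add c F').trans h.symm)⟩

theorem taylorSpace_succ_self (m : ℕ) : taylorSpace b (m + 1 : ℕ) (m + 1) =
    powerSpan b {0} ⊔ (taylorSpace b m m).map (fracInt b 1) := by
  rw [taylorSpace_succ, map_taylorSpace (by simp), NNReal.coe_natCast, sub_self, Nat.cast_succ]

theorem eqOn_primitive_of_ae_eq {f g : ℝ → ℝ} (h : f =ᵐ[volume.restrict (Icc 0 b)] g) :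
    EqOn (fun t => ∫ s in (0 : ℝ)..t, f s) (fun t => ∫ s in (0 : ℝ)..t, g s) (Icc 0 b) :=
  fun t ht => by simpa only [RL_one] using RL_congr one_ne_zero h ht

theorem mem_taylorSpace_self_iff {m : ℕ} {F : L1Icc b} :
    F ∈ taylorSpace b m m ↔
      ∃ G, G =ᵐ[volume.restrict (Icc 0 b)] F ∧ IteratedPrimitive b m G := by
  induction m generalizing F with
  | zero =>
    rw [Nat.cast_zero, taylorSpace_zero_zero]
    exact iff_of_true Submodule.mem_top ⟨F, ae_eq_refl _, integrableOn_coeFn F⟩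
  | succ m ih =>
    rw [taylorSpace_succ_self, mem_powerSpan_zero_sup_map_fracInt_one]
    constructor
    · rintro ⟨c, F', hF', hF⟩
      obtain ⟨G', hGF', hG'⟩ := ih.1 hF'
      refine ⟨_, hF.symm, G', hG', fun t ht => ?_⟩
      simpa using (eqOn_primitive_of_ae_eq hGF' ht).symm
    · rintro ⟨G, hGF, G', hG', hG⟩
      have hint := hG'.integrableOn.integrable
      refine ⟨G 0, hint.toL1, ih.2 ⟨G', hint.coeFn_toL1.symm, hG'⟩, ?_⟩
      filter_upwards [hGF, ae_restrict_mem measurableSet_Icc] with t hGFt ht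
      rw [← hGFt, hG t ht]
      exact congrArg (G 0 + ·) (eqOn_primitive_of_ae_eq hint.coeFn_toL1 ht).symm

theorem memX_coe_iff (hb : 0 < b) {α : ℝ≥0} {f : ℝ → ℝ} : MemX b α f ↔
    ∃ hf : IntegrableOn f (Icc 0 b) volume,
      hf.integrable.toL1 ∈ taylorSpace b α ⌈(α : ℝ)⌉₊ := by
  refine exists_prop.symm.trans (exists_congr fun hf => ?_)
  rcases eq_or_ne α 0 with rfl | hα
  · simp [taylorSpace_zero_zero]
  have hα' : (α : ℝ) ≠ 0 := NNReal.coe_ne_zero.2 hα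
  obtain ⟨m, hm⟩ : ∃ m : ℕ, ⌈(α : ℝ)⌉₊ = m + 1 :=
    Nat.exists_eq_succ_of_ne_zero (Nat.ceil_pos.2 (α.coe_nonneg.lt_of_ne' hα')).ne'
  obtain ⟨δ, hδ⟩ : ∃ δ : ℝ≥0, ((m + 1 : ℕ) : ℝ≥0) = α + δ :=
    exists_add_of_le (NNReal.coe_le_coe.1 (by simpa [hm] using Nat.le_ceil (α : ℝ)))
  have order_eq : ((m + 1 : ℕ) : ℝ) - α = δ := by
    rw [← NNReal.coe_natCast, hδ, NNReal.coe_add, add_sub_cancel_left]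
  have mem_iff : hf.integrable.toL1 ∈ taylorSpace b α (m + 1) ↔
      fracInt b δ hf.integrable.toL1 ∈ taylorSpace b (m + 1 : ℕ) (m + 1) := by
    rw [hδ, ← map_taylorSpace (N := m + 1) (hm ▸ Nat.ceil_lt_add_one α.coe_nonneg)]
    exact (fracInt_injective hb δ).mem_set_image.symm
  rw [hm, mem_iff, fracInt_toL1 δ hf, mem_taylorSpace_self_iff, imp_iff_right hα',
    order_eq]
  refine exists_congr fun G => ?_
  rw [memACn_succ_iff_iteratedPrimitive hb]
  have := Integrable.coeFn_toL1 (integrableOn_RL δ.coe_nonneg hf).integrable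
  exact and_congr_left' ⟨fun h => h.trans this.symm, fun h => h.trans this⟩

end AbsolutelyContinuous

section Intersection

variable {b : ℝ}

theorem taylorSpace_le_range_fracInt {α δ : ℝ≥0} {N : ℕ} (hδ : δ ≤ α) (hN : δ + N < (α + 1 : ℝ)) :
    taylorSpace b α N ≤ LinearMap.range (fracInt b δ) :=
  sup_le (powerSpan_le_range (taylorExponents_subset_Ioi (by linarith))) (range_fracInt_anti hδ)

theorem taylorSpace_add_natCast_le (δ : ℝ≥0) (p M : ℕ) :
    taylorSpace b (δ + p) (M + p) ≤ taylorSpace b δ M := by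
  have exponents_subset : taylorExponents (δ + p : ℝ≥0) (M + p) ⊆
      taylorExponents δ M ∪ Ioi (δ - 1 : ℝ) := by
    rintro _ ⟨k, hk, rfl⟩
    rw [NNReal.coe_add, NNReal.coe_natCast]
    rcases le_or_gt k p with hkp | hkp
    · have : (k : ℝ) ≤ p := Nat.cast_le.2 hkp
      exact Or.inr (by rw [mem_Ioi]; linarith)
    · obtain ⟨l, rfl⟩ := Nat.exists_eq_add_of_lt hkp
      exact Or.inl ⟨l + 1, ⟨by lia, by have := hk.2; lia⟩, by push_cast; ring⟩
  refine sup_le ((powerSpan_mono exponents_subset).trans ?_)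
    ((range_fracInt_anti le_self_add).trans le_sup_right)
  rw [powerSpan_union]
  exact sup_le_sup_left (powerSpan_le_range Subset.rfl) _

theorem taylorExponents_diff_subset_Ioc {α δ : ℝ} {N K : ℕ} (hN : N < α + 1) (hK : α - δ ≤ K) :
    taylorExponents α N \ taylorExponents α K ⊆ Ioc (-1) (δ - 1) := by
  rintro γ ⟨hγN, hγK⟩
  refine ⟨(taylorExponents_subset_Ioc hN hγN).1, ?_⟩
  obtain ⟨k, hk, rfl⟩ := hγN
  have : K < k := not_le.1 fun hkK => hγK (mem_image_of_mem _ ⟨hk.1, hkK⟩)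
  have : (K : ℝ) + 1 ≤ k := by exact_mod_cast this
  dsimp only
  linarith

theorem disjoint_taylorExponents {α δ : ℝ} (hαδ : ∀ z : ℤ, α - δ ≠ z) (N M : ℕ) :
    Disjoint (taylorExponents α N) (taylorExponents δ M) := by
  rw [disjoint_left]
  rintro _ ⟨k, -, rfl⟩ ⟨l, -, hl⟩
  refine hαδ (k - l) ?_
  push_cast
  linear_combination -hl

theorem taylorSpace_inf_taylorSpace (hb : 0 < b) {α δ : ℝ≥0} {N M : ℕ} (hδ : δ ≤ α)
    (hN : N < (α + 1 : ℝ)) (hM : M < (δ + 1 : ℝ)) (hNαδ : ⌈(α - δ : ℝ)⌉₊ ≤ N)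
    (hαδ : ∀ z : ℤ, (α - δ : ℝ) ≠ z) :
    taylorSpace b α N ⊓ taylorSpace b δ M = taylorSpace b α ⌈(α - δ : ℝ)⌉₊ := by
  set K := ⌈(α - δ : ℝ)⌉₊
  have regular_le : taylorSpace b α K ≤ taylorSpace b δ M := by
    refine (taylorSpace_le_range_fracInt hδ ?_).trans le_sup_right
    have := Nat.ceil_lt_add_one (sub_nonneg.2 (NNReal.coe_le_coe.2 hδ))
    linarith
  have decomposition : taylorSpace b α N =
      taylorSpace b α K ⊔ powerSpan b (taylorExponents α N \ taylorExponents α K) := by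
    rw [taylorSpace, taylorSpace, sup_right_comm, ← powerSpan_union,
      union_sdiff_cancel (taylorExponents_mono α hNαδ)]
  have singular_disjoint :
      Disjoint (powerSpan b (taylorExponents α N \ taylorExponents α K)) (taylorSpace b δ M) :=
    disjoint_powerSpan_sup_range hb (taylorExponents_diff_subset_Ioc hN (Nat.le_ceil _))
      (taylorExponents_subset_Ioc hM) ((disjoint_taylorExponents hαδ N M).mono_left sdiff_subset)
  rw [decomposition, sup_inf_assoc_of_le _ regular_le, singular_disjoint.eq_bot, sup_bot_eq]

theorem taylorSpace_ceil_le_of_sub_eq_intCast {α δ : ℝ≥0} (hδ : δ ≤ α) {z : ℤ}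
    (hz : (α - δ : ℝ) = z) :
    taylorSpace b α ⌈(α : ℝ)⌉₊ ≤ taylorSpace b δ ⌈(δ : ℝ)⌉₊ := by
  obtain ⟨p, rfl⟩ : ∃ p : ℕ, z = p := by
    refine Int.eq_ofNat_of_zero_le (Int.cast_nonneg_iff (R := ℝ) |>.1 ?_)
    rw [← hz]
    exact sub_nonneg.2 (NNReal.coe_le_coe.2 hδ)
  obtain rfl : α = δ + p := NNReal.coe_injective (by push_cast at hz ⊢; linarith)
  rw [NNReal.coe_add, NNReal.coe_natCast, Nat.ceil_add_natCast δ.coe_nonneg]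
  exact taylorSpace_add_natCast_le δ p _

theorem iInf_taylorSpace_ceil (hb : 0 < b) {ι : Type*} {β : ι → ℝ≥0} {n : ι}
    (hn : ∀ j, β j ≤ β n) {βstar : ℝ}
    (hstar : IsGreatest {x : ℝ | ∃ j, x = β j ∧ ∀ z : ℤ, (β n - β j : ℝ) ≠ z} βstar ∨
      ({x : ℝ | ∃ j, x = β j ∧ ∀ z : ℤ, (β n - β j : ℝ) ≠ z} = ∅ ∧ βstar = 0)) :
    ⨅ j, taylorSpace b (β j) ⌈(β j : ℝ)⌉₊ = taylorSpace b (β n) ⌈β n - βstar⌉₊ := by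
  have ceil_lt (δ : ℝ≥0) : ⌈(δ : ℝ)⌉₊ < (δ + 1 : ℝ) := Nat.ceil_lt_add_one δ.coe_nonneg
  have inf_eq {j : ι} (hj : ∀ z : ℤ, (β n - β j : ℝ) ≠ z) :=
    taylorSpace_inf_taylorSpace hb (hn j) (ceil_lt _) (ceil_lt _)
      (Nat.ceil_mono (sub_le_self _ (β j).coe_nonneg)) hj
  apply le_antisymm
  · rcases hstar with ⟨⟨j, rfl, hj⟩, -⟩ | ⟨-, rfl⟩
    · rw [← inf_eq hj]
      exact le_inf (iInf_le _ n) (iInf_le _ j)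
    · rw [sub_zero]
      exact iInf_le _ n
  · have hβstar : 0 ≤ βstar := by
      rcases hstar with ⟨⟨j, rfl, -⟩, -⟩ | ⟨-, rfl⟩
      exacts [(β j).coe_nonneg, le_rfl]
    refine le_iInf fun j => ?_
    by_cases hj : ∀ z : ℤ, (β n - β j : ℝ) ≠ z
    · have hjstar : (β j : ℝ) ≤ βstar := by
        rcases hstar with hmax | ⟨hempty, -⟩
        · exact hmax.2 ⟨j, rfl, hj⟩
        · exact (eq_empty_iff_forall_notMem.1 hempty _ ⟨j, rfl, hj⟩).elim
      refine (taylorSpace_mono _ (Nat.ceil_mono (sub_le_sub_left hjstar _))).trans ?_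
      exact (inf_eq hj).symm.le.trans inf_le_right
    · push Not at hj
      obtain ⟨z, hz⟩ := hj
      exact (taylorSpace_mono _ (Nat.ceil_mono (sub_le_self _ hβstar))).trans
        (taylorSpace_ceil_le_of_sub_eq_intCast (hn j) hz)

end Intersection

section TaylorExpansion

/-- The fractional Taylor expansion of order `α` with singular coefficients `c 1, …, c N` and
remainder `I^α g`. -/
noncomputable def taylorExpansion (α : ℝ) (N : ℕ) (c : ℕ → ℝ) (g : ℝ → ℝ) : ℝ → ℝ := fun t =>
  (∑ k ∈ Finset.Icc 1 N, c k * t ^ (α - k)) + RL α g t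

variable {b : ℝ} {α : ℝ≥0} {N : ℕ}

theorem mem_taylorSpace_iff {F : L1Icc b} : F ∈ taylorSpace b α N ↔
    ∃ (c : ℕ → ℝ) (G : L1Icc b),
      ∑ k ∈ Finset.Icc 1 N, c k • rpowL1 b (α - k) + fracInt b α G = F := by
  have mem_powerSpan_iff (P : L1Icc b) : P ∈ powerSpan b (taylorExponents α N) ↔
      ∃ c : ℕ → ℝ, ∑ k ∈ Finset.Icc 1 N, c k • rpowL1 b (α - k) = P := by
    rw [powerSpan, taylorExponents, image_image, ← Finset.coe_Icc (1 : ℕ) N]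
    exact Submodule.mem_span_image_finset_iff_exists_fun' ℝ
  simp only [taylorSpace, Submodule.mem_sup, mem_powerSpan_iff, LinearMap.mem_range,
    exists_exists_eq_and]

theorem coeFn_sum_smul_rpowL1_add_fracInt (hN : N < (α + 1 : ℝ)) (c : ℕ → ℝ) {g : ℝ → ℝ}
    (hg : IntegrableOn g (Icc 0 b)) :
    ⇑(∑ k ∈ Finset.Icc 1 N, c k • rpowL1 b (α - k) + fracInt b α hg.integrable.toL1)
      =ᵐ[volume.restrict (Icc 0 b)] taylorExpansion α N c g := by
  have exponents_gt (k : ℕ) (hk : k ∈ Finset.Icc 1 N) : -1 < (α - k : ℝ) :=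
    (taylorExponents_subset_Ioc hN (mem_image_of_mem _ (Finset.mem_Icc.1 hk))).1
  rw [fracInt_toL1 α hg]
  filter_upwards [Lp.coeFn_add (∑ k ∈ Finset.Icc 1 N, c k • rpowL1 b (α - k))
      (integrableOn_RL α.coe_nonneg hg).integrable.toL1,
    coeFn_sum_smul_rpowL1 (b := b) _ exponents_gt c,
    (integrableOn_RL α.coe_nonneg hg).integrable.coeFn_toL1] with t hadd hsum hint
  rw [hadd, Pi.add_apply, hsum, hint, taylorExpansion]

theorem toL1_mem_taylorSpace_iff (hN : N < (α + 1 : ℝ)) {f : ℝ → ℝ} :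
    (∃ hf : IntegrableOn f (Icc 0 b) volume, hf.integrable.toL1 ∈ taylorSpace b α N) ↔
      ∃ (c : ℕ → ℝ) (g : ℝ → ℝ), IntegrableOn g (Icc 0 b) ∧
        f =ᵐ[volume.restrict (Icc 0 b)] taylorExpansion α N c g := by
  simp only [mem_taylorSpace_iff]
  constructor
  · rintro ⟨hf, c, G, hfG⟩
    refine ⟨c, G, integrableOn_coeFn G, ?_⟩
    have := coeFn_sum_smul_rpowL1_add_fracInt hN c (integrableOn_coeFn G)
    rw [Integrable.toL1_coeFn, hfG] at this
    exact hf.integrable.coeFn_toL1.symm.trans this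
  · rintro ⟨c, g, hg, hfg⟩
    have hf := hfg.trans (coeFn_sum_smul_rpowL1_add_fracInt hN c hg).symm
    have hfint : IntegrableOn f (Icc 0 b) := (integrableOn_coeFn _).congr hf.symm
    exact ⟨hfint, c, hg.integrable.toL1, Lp.ext (hf.symm.trans hfint.integrable.coeFn_toL1.symm)⟩

theorem linearIndepOn_mkQ_rpowL1_sub_natCast (hb : 0 < b) (hN : N < (α + 1 : ℝ)) :
    LinearIndepOn ℝ (fun k : ℕ => (LinearMap.range (fracInt b α)).mkQ (rpowL1 b (α - k)))
      (Finset.Icc 1 N) := by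
  rw [Finset.coe_Icc]
  exact ((linearIndepOn_mkQ_rpowL1 hb α).mono (taylorExponents_subset_Ioc hN)).comp_of_image
    fun k _ l _ h => by simpa using h

theorem taylorExpansion_unique (hb : 0 < b) (hN : N < (α + 1 : ℝ)) {c c' : ℕ → ℝ} {g g' : ℝ → ℝ}
    (hg : IntegrableOn g (Icc 0 b)) (hg' : IntegrableOn g' (Icc 0 b))
    (h : taylorExpansion α N c g =ᵐ[volume.restrict (Icc 0 b)] taylorExpansion α N c' g') :
    (∀ k ∈ Finset.Icc 1 N, c k = c' k) ∧ g =ᵐ[volume.restrict (Icc 0 b)] g' := by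
  have eq_in_L1 := Lp.ext <| (coeFn_sum_smul_rpowL1_add_fracInt hN c hg).trans <|
    h.trans (coeFn_sum_smul_rpowL1_add_fracInt hN c' hg').symm
  have coeff_eq : ∀ k ∈ Finset.Icc 1 N, c k = c' k := by
    refine linearIndepOn_finset_iffₛ.1 (linearIndepOn_mkQ_rpowL1_sub_natCast hb hN) c c' ?_
    have mkQ_fracInt (G : L1Icc b) : (LinearMap.range (fracInt b α)).mkQ (fracInt b α G) = 0 :=
      (Submodule.Quotient.mk_eq_zero _).2 ⟨G, rfl⟩
    simpa only [map_add, map_sum, map_smul, mkQ_fracInt, add_zero]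
      using congrArg (LinearMap.range (fracInt b α)).mkQ eq_in_L1
  refine ⟨coeff_eq, ?_⟩
  rw [Finset.sum_congr rfl fun k hk => by rw [coeff_eq k hk], add_right_inj] at eq_in_L1
  exact (Integrable.toL1_eq_toL1_iff _ _ _ _).1 (fracInt_injective hb α eq_in_L1)

end TaylorExpansion

theorem inter_X_structure_general {b : ℝ} (hb : 0 < b) {ι : Type*} {β : ι → ℝ} (hβ : ∀ j, 0 ≤ β j)
    {n : ι} (hn : ∀ j, β j ≤ β n) {βstar : ℝ}
    (hstar : IsGreatest {x : ℝ | ∃ j, x = β j ∧ ∀ z : ℤ, β n - β j ≠ z} βstar ∨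
      ({x : ℝ | ∃ j, x = β j ∧ ∀ z : ℤ, β n - β j ≠ z} = ∅ ∧ βstar = 0)) :
    (∀ f : ℝ → ℝ, (∀ j, MemX b (β j) f) ↔ ∃ (c : ℕ → ℝ) (g : ℝ → ℝ), IntegrableOn g (Icc 0 b) ∧
      f =ᵐ[volume.restrict (Icc 0 b)] taylorExpansion (β n) ⌈β n - βstar⌉₊ c g) ∧
    ∀ (c c' : ℕ → ℝ) (g g' : ℝ → ℝ), IntegrableOn g (Icc 0 b) → IntegrableOn g' (Icc 0 b) →
      taylorExpansion (β n) ⌈β n - βstar⌉₊ c g =ᵐ[volume.restrict (Icc 0 b)]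
        taylorExpansion (β n) ⌈β n - βstar⌉₊ c' g' →
      (∀ k ∈ Finset.Icc 1 ⌈β n - βstar⌉₊, c k = c' k) ∧ g =ᵐ[volume.restrict (Icc 0 b)] g' := by
  have hβstar : 0 ≤ βstar := by
    rcases hstar with ⟨⟨j, rfl, -⟩, -⟩ | ⟨-, rfl⟩
    exacts [hβ j, le_rfl]
  have ceil_lt : ⌈β n - βstar⌉₊ < β n + 1 :=
    (Nat.cast_le.2 (Nat.ceil_mono (sub_le_self _ hβstar))).trans_lt (Nat.ceil_lt_add_one (hβ n))
  lift β to ι → ℝ≥0 using hβ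
  refine ⟨fun f => ?_, fun c c' g g' hg hg' => taylorExpansion_unique hb ceil_lt hg hg'⟩
  rw [← toL1_mem_taylorSpace_iff ceil_lt,
    ← iInf_taylorSpace_ceil hb (fun j => NNReal.coe_le_coe.1 (hn j)) hstar]
  simp only [memX_coe_iff hb, Submodule.mem_iInf]
  exact ⟨fun h => ⟨(h n).1, fun j => (h j).2⟩, fun ⟨hf, h⟩ j => ⟨hf, h j⟩⟩

/-- Structure of the intersection of summable-derivative spaces: for
`β_n > ⋯ > β_1 ≥ 0` and `β_*` the greatest `β_j` (`j < n`) with `β_n - β_j ∉ ℤ`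
(`β_* = 0` if none exists),
`X_{β_1} ∩ ⋯ ∩ X_{β_n} = ⟨t^{β_n-⌈β_n-β_*⌉}, …, t^{β_n-1}⟩ ⊕ I^{β_n}(L¹[0,b])`:
every `f` in the intersection decomposes (uniquely, in `L¹[0,b]`) as such a sum, and
conversely every such sum lies in the intersection; in particular `I^{β_n}(L¹[0,b])`
is contained in the intersection, with codimension `⌈β_n-β_*⌉`. -/
theorem inter_X_structure (b : ℝ) (hb : 0 < b) (n : ℕ) (hn : 1 ≤ n) (β : ℕ → ℝ)
    (hmono : ∀ i j : ℕ, 1 ≤ i → i < j → j ≤ n → β i < β j) (hβ1 : 0 ≤ β 1)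
    (βstar : ℝ)
    (hstar :
      IsGreatest {x : ℝ | ∃ j, 1 ≤ j ∧ j < n ∧ x = β j ∧ ∀ z : ℤ, β n - β j ≠ (z:ℝ)} βstar ∨
      ({x : ℝ | ∃ j, 1 ≤ j ∧ j < n ∧ x = β j ∧ ∀ z : ℤ, β n - β j ≠ (z:ℝ)} = ∅ ∧ βstar = 0)) :
    (∀ f : ℝ → ℝ, (∀ j, 1 ≤ j → j ≤ n → MemX b (β j) f) →
      ∃ (cc : ℕ → ℝ) (g : ℝ → ℝ), IntegrableOn g (Set.Icc 0 b) volume ∧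
        f =ᵐ[volume.restrict (Set.Icc 0 b)]
          fun t => (∑ k ∈ Finset.Icc 1 ⌈β n - βstar⌉₊, cc k * t ^ (β n - (k:ℝ)))
            + RL (β n) g t) ∧
    (∀ (cc : ℕ → ℝ) (g : ℝ → ℝ), IntegrableOn g (Set.Icc 0 b) volume →
      ∀ j, 1 ≤ j → j ≤ n →
        MemX b (β j)
          (fun t => (∑ k ∈ Finset.Icc 1 ⌈β n - βstar⌉₊, cc k * t ^ (β n - (k:ℝ)))
            + RL (β n) g t)) ∧
    (∀ (cc cc' : ℕ → ℝ) (g g' : ℝ → ℝ),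
      IntegrableOn g (Set.Icc 0 b) volume → IntegrableOn g' (Set.Icc 0 b) volume →
      (fun t => (∑ k ∈ Finset.Icc 1 ⌈β n - βstar⌉₊, cc k * t ^ (β n - (k:ℝ)))
          + RL (β n) g t)
        =ᵐ[volume.restrict (Set.Icc 0 b)]
        (fun t => (∑ k ∈ Finset.Icc 1 ⌈β n - βstar⌉₊, cc' k * t ^ (β n - (k:ℝ)))
          + RL (β n) g' t) →
      (∀ k ∈ Finset.Icc 1 ⌈β n - βstar⌉₊, cc k = cc' k) ∧
        g =ᵐ[volume.restrict (Set.Icc 0 b)] g') := by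
  have hβmono : MonotoneOn β (Icc 1 n) :=
    StrictMonoOn.monotoneOn fun i hi j hj hij => hmono i j hi.1 hij hj.2
  have candidates_eq :
      {x : ℝ | ∃ j, 1 ≤ j ∧ j < n ∧ x = β j ∧ ∀ z : ℤ, β n - β j ≠ (z:ℝ)} =
        {x : ℝ | ∃ j : Icc 1 n, x = β j ∧ ∀ z : ℤ, β n - β j ≠ z} := by
    ext x
    constructor
    · rintro ⟨j, hj, hjn, h⟩
      exact ⟨⟨j, hj, hjn.le⟩, h⟩
    · rintro ⟨⟨j, hj, hjn⟩, hx, h⟩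
      exact ⟨j, hj, hjn.lt_of_ne (by rintro rfl; exact h 0 (by simp)), hx, h⟩
  rw [candidates_eq] at hstar
  obtain ⟨mem_iff, unique⟩ := inter_X_structure_general hb
    (β := fun j : Icc 1 n => β j) (n := ⟨n, hn, le_rfl⟩)
    (fun j => hβ1.trans (hβmono ⟨le_rfl, hn⟩ j.2 j.2.1))
    (fun j => hβmono j.2 ⟨hn, le_rfl⟩ j.2.2) hstar
  refine ⟨fun f hf => (mem_iff f).1 fun j => hf j j.2.1 j.2.2, fun c g hg j hj hjn => ?_, unique⟩
  exact (mem_iff _).2 ⟨c, g, hg, ae_eq_refl _⟩ ⟨j, hj, hjn⟩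
end

section
/- (Titchmarsh convolution theorem.) Let f, g ∈ L¹[0,b] be such that the convolution (f ∗ g)(t) = ∫₀^t f(t−s) g(s) ds vanishes for almost every t ∈ [0,b]. Then there exist λ, μ ≥ 0 with λ + μ ≥ b such that f = 0 almost everywhere on [0,λ] and g = 0 almost everywhere on [0,μ]. -/
open MeasureTheory Set Filter Topology

/-!
A compactly supported integrable function vanishes a.e. on `(-∞, m)` iff its Laplace transform at
real `x → ∞` is `O(exp (-m x))`. For the nontrivial direction, test the function against the kernel
`exp (-exp (x (τ - t)))`, which tends to the indicator of `(τ, ∞)` as `x → ∞`; expanding the outer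
exponential turns the integral into a series in the Laplace transform at `x, 2x, 3x, …`.

Let `a ∗ b` vanish below `T`. Since `(t a) ∗ b` and `a ∗ (t b)` have sum `t (a ∗ b)`, and the
product of their Laplace transforms is that of `a ∗ b` and `(t a) ∗ (t b)`, comparing decay rates
shows that the level below which all `(tⁱ a) ∗ (tʲ b)` with `i + j ≤ n` vanish, capped at `T`, is a
midpoint concave sequence in `n`. It is bounded below because the supports are compact, so it is
nondecreasing. Hence for `t < T` all the moments of `s ↦ a s * b (t - s)` vanish, and so does this
function a.e. By Fubini, for every `c` either `a` vanishes below `c` or `b` vanishes below `T - c`;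
both conditions are closed in `c`, so by connectedness some `c` satisfies both.
-/

section

open Asymptotics
open scoped Convolution Nat
open ContinuousLinearMap (mul)

section ExpSeries

variable {X E : Type*} [MeasurableSpace X] {μ : Measure X} [NormedAddCommGroup E] [NormedSpace ℝ E]

theorem hasSum_integral_pow_div_factorial_smul {e : X → E} {w : X → ℝ} {M : ℝ}
    (he : Integrable e μ) (hw : AEStronglyMeasurable w μ) (hM : ∀ᵐ x ∂μ, e x ≠ 0 → |w x| ≤ M) :
    HasSum (fun n : ℕ ↦ ∫ x, (w x ^ n / n !) • e x ∂μ) (∫ x, Real.exp (w x) • e x ∂μ) := by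
  have hbound (n : ℕ) : ∀ᵐ x ∂μ, ‖(w x ^ n / n !) • e x‖ ≤ M ^ n / n ! * ‖e x‖ := by
    filter_upwards [hM] with x hx
    rcases eq_or_ne (e x) 0 with h0 | h0
    · simp [h0]
    · rw [norm_smul, norm_div, norm_pow, Real.norm_eq_abs, Real.norm_natCast]
      gcongr
      exact hx h0
  have hint (n : ℕ) : Integrable (fun x ↦ (w x ^ n / n !) • e x) μ :=
    (he.norm.const_mul _).mono' (((hw.pow n).mul_const _).smul he.1) (hbound n)
  have hsum : Summable fun n : ℕ ↦ ∫ x, ‖(w x ^ n / n !) • e x‖ ∂μ :=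
    .of_nonneg_of_le (fun n ↦ integral_nonneg fun x ↦ norm_nonneg _)
      (fun n ↦ (integral_mono_ae (hint n).norm (he.norm.const_mul _) (hbound n)).trans_eq
        (integral_const_mul _ _))
      ((Real.summable_pow_div_factorial M).mul_right _)
  have hexp (x : X) : Real.exp (w x) • e x = ∑' n : ℕ, (w x ^ n / n !) • e x := by
    rw [Real.exp_eq_exp_ℝ]
    exact ((NormedSpace.expSeries_div_hasSum_exp (w x)).smul_const (e x)).tsum_eq.symm
  simpa only [hexp] using hasSum_integral_of_summable_integral_norm hint hsum

end ExpSeries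

section MeasurableSwap

variable {X Y E : Type*} [MeasurableSpace X] [MeasurableSpace Y] [TopologicalSpace E]
  [TopologicalSpace.MetrizableSpace E] [Zero E]

theorem ae_ae_eq_zero_swap {μ : Measure X} {ν : Measure Y} [SFinite μ] [SFinite ν]
    {k : X × Y → E} (hk : AEStronglyMeasurable k (μ.prod ν))
    (h : ∀ᵐ x ∂μ, ∀ᵐ y ∂ν, k (x, y) = 0) : ∀ᵐ y ∂ν, ∀ᵐ x ∂μ, k (x, y) = 0 := by
  have hmk : ∀ᵐ y ∂ν, ∀ᵐ x ∂μ, hk.mk k (x, y) = 0 := by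
    refine (Measure.ae_ae_comm
      (hk.stronglyMeasurable_mk.measurableSet_eq_fun stronglyMeasurable_const)).1 ?_
    filter_upwards [h, Measure.ae_ae_of_ae_prod hk.ae_eq_mk] with x h0 hx
    filter_upwards [h0, hx] with y h0 hy
    rw [← hy, h0]
  filter_upwards [hmk, Measure.ae_ae_of_ae_prod
    (Measure.measurePreserving_swap.quasiMeasurePreserving.ae hk.ae_eq_mk)] with y h0 hy
  filter_upwards [h0, hy] with x h0 hx
  exact hx.trans h0

end MeasurableSwap

section Concave

variable {K : Type*} [Field K] [LinearOrder K] [IsStrictOrderedRing K] [Archimedean K]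

theorem monotone_of_add_le_two_mul_of_bddBelow {u : ℕ → K}
    (hu : ∀ n, u n + u (n + 2) ≤ 2 * u (n + 1)) (hbdd : BddBelow (range u)) : Monotone u := by
  refine monotone_nat_of_le_succ fun n ↦ le_of_not_gt fun hlt ↦ ?_
  have hanti : Antitone fun k ↦ u (k + 1) - u k :=
    antitone_nat_of_succ_le fun k ↦ by linarith [hu k]
  have hlinear (k : ℕ) : u (n + k) ≤ u n - k * (u n - u (n + 1)) := by
    induction k with
    | zero => simp
    | succ k ih =>
      have hstep : u (n + k + 1) - u (n + k) ≤ u (n + 1) - u n := hanti (Nat.le_add_right n k)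
      rw [← add_assoc]
      push_cast
      linarith
  obtain ⟨r, hr⟩ := hbdd
  obtain ⟨k, hk⟩ := exists_nat_gt ((u n - r) / (u n - u (n + 1)))
  rw [div_lt_iff₀ (sub_pos.2 hlt)] at hk
  linarith [hlinear k, hr (mem_range_self (n + k))]

end Concave

section Zero

variable {E : Type*} [Zero E]

/-- `e` vanishes almost everywhere on `(-∞, c)`, that is, its essential support starts at `c` or
later. Stated as a relation so that no infimum of a possibly unbounded set is needed. -/
def VanishesBelow (e : ℝ → E) (c : ℝ) : Prop := ∀ᵐ t, t < c → e t = 0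

theorem VanishesBelow.mono {e : ℝ → E} {c d : ℝ} (h : VanishesBelow e c) (hdc : d ≤ c) :
    VanishesBelow e d :=
  Eventually.mono h fun _ ht htd ↦ ht (htd.trans_le hdc)

theorem isClosed_setOf_vanishesBelow (e : ℝ → E) : IsClosed {c | VanishesBelow e c} := by
  refine IsSeqClosed.isClosed fun u c hu hlim ↦ ?_
  filter_upwards [ae_all_iff.2 hu] with t ht htc
  obtain ⟨n, hn⟩ := (hlim.eventually (lt_mem_nhds htc)).exists
  exact ht n hn

theorem exists_vanishesBelow_of_hasCompactSupport {e : ℝ → E} (he : HasCompactSupport e) :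
    ∃ c, VanishesBelow e c := by
  obtain ⟨c, hc⟩ := he.isCompact.bddBelow
  exact ⟨c, Eventually.of_forall fun t ht ↦
    image_eq_zero_of_notMem_tsupport fun hmem ↦ ht.not_ge (hc hmem)⟩

theorem vanishesBelow_indicator_Icc (f : ℝ → E) (x y : ℝ) :
    VanishesBelow ((Icc x y).indicator f) x :=
  Eventually.of_forall fun _ ht ↦ indicator_of_notMem (fun hmem ↦ ht.not_ge hmem.1) f

theorem VanishesBelow.ae_restrict_Icc_eq_zero {f : ℝ → E} {x y c : ℝ}
    (h : VanishesBelow ((Icc x y).indicator f) c) (hcy : c ≤ y) :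
    ∀ᵐ t ∂volume.restrict (Icc x c), f t = 0 := by
  rw [ae_restrict_iff' measurableSet_Icc]
  filter_upwards [h, Measure.ae_ne volume c] with t ht htc hmem
  have hmemxy : t ∈ Icc x y := ⟨hmem.1, hmem.2.trans hcy⟩
  rw [← ht (hmem.2.lt_of_ne htc), indicator_of_mem hmemxy]

end Zero

section CompactlyIntegrable

variable {E : Type*} [NormedAddCommGroup E]

/-- Lebesgue-integrable functions with compact support, the class in which all convolutions, moments
and Laplace integrals of the argument converge. -/
structure CompactlyIntegrable (e : ℝ → E) : Prop where
  integrable : Integrable e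
  hasCompactSupport : HasCompactSupport e

theorem compactlyIntegrable_indicator_Icc {f : ℝ → E} {x y : ℝ} (hf : IntegrableOn f (Icc x y)) :
    CompactlyIntegrable ((Icc x y).indicator f) where
  integrable := hf.integrable_indicator measurableSet_Icc
  hasCompactSupport := .intro isCompact_Icc fun _ ht ↦ indicator_of_notMem ht f

end CompactlyIntegrable

variable {E E' F : Type*} [NormedAddCommGroup E] [NormedSpace ℝ E]
  [NormedAddCommGroup E'] [NormedSpace ℝ E'] [NormedAddCommGroup F] [NormedSpace ℝ F]

namespace VanishesBelow

theorem smul {e : ℝ → E} {c : ℝ} (h : VanishesBelow e c) (w : ℝ → ℝ) :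
    VanishesBelow (fun t ↦ w t • e t) c :=
  Eventually.mono h fun t ht htc ↦ by simp only [ht htc, smul_zero]

theorem convolution {a : ℝ → E} {b : ℝ → E'} {p q : ℝ} (ha : VanishesBelow a p)
    (hb : VanishesBelow b q) (L : E →L[ℝ] E' →L[ℝ] F) : VanishesBelow (a ⋆[L] b) (p + q) := by
  refine Eventually.of_forall fun t ht ↦ integral_eq_zero_of_ae ?_
  filter_upwards [ha, (quasiMeasurePreserving_sub_left_of_right_invariant volume t).ae hb]
    with s has hbs
  rcases lt_or_ge s p with hs | hs
  · simp [has hs]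
  · simp [hbs (by linarith)]

end VanishesBelow

theorem vanishesBelow_of_forall_setIntegral_Iic_eq_zero [CompleteSpace E] {e : ℝ → E} {m : ℝ}
    (he : Integrable e) (h : ∀ τ < m, ∫ t in Iic τ, e t = 0) : VanishesBelow e m := by
  filter_upwards [LocallyIntegrable.ae_hasDerivAt_integral he.locallyIntegrable] with t ht htm
  refine (ht (m - 1)).unique ((hasDerivAt_const t 0).congr_of_eventuallyEq ?_)
  filter_upwards [Iio_mem_nhds htm] with x hx
  rw [← intervalIntegral.integral_Iic_sub_Iic he.integrableOn he.integrableOn, h x hx,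
    h (m - 1) (sub_one_lt m), sub_zero]

namespace CompactlyIntegrable

theorem smul {e : ℝ → E} (he : CompactlyIntegrable e) {w : ℝ → ℝ} (hw : Continuous w) :
    CompactlyIntegrable fun t ↦ w t • e t where
  integrable := by
    refine (integrableOn_iff_integrable_of_support_subset (s := tsupport e) ?_).1
      (he.integrable.integrableOn.continuousOn_smul hw.continuousOn he.hasCompactSupport)
    exact (Function.support_smul_subset_right w e).trans (subset_tsupport e)
  hasCompactSupport := he.hasCompactSupport.smul_left

theorem convolution {a : ℝ → E} {b : ℝ → E'} (ha : CompactlyIntegrable a)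
    (hb : CompactlyIntegrable b) (L : E →L[ℝ] E' →L[ℝ] F) : CompactlyIntegrable (a ⋆[L] b) where
  integrable := ha.integrable.integrable_convolution L hb.integrable
  hasCompactSupport := ha.hasCompactSupport.convolution L hb.hasCompactSupport

theorem hasSum_integral_pow_div_factorial_smul {e : ℝ → E} (he : CompactlyIntegrable e) {w : ℝ → ℝ}
    (hw : Continuous w) :
    HasSum (fun n : ℕ ↦ ∫ t, (w t ^ n / n !) • e t) (∫ t, Real.exp (w t) • e t) := by
  obtain ⟨M, hM⟩ := he.hasCompactSupport.isCompact.exists_bound_of_continuousOn hw.continuousOn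
  exact _root_.hasSum_integral_pow_div_factorial_smul he.integrable hw.aestronglyMeasurable
    (Eventually.of_forall fun t ht ↦ hM t (subset_tsupport e ht))

end CompactlyIntegrable

/-- The two-sided Laplace transform at real arguments, whose decay rate at `+∞` detects where `e`
starts. It is `0` by convention wherever the integral diverges. -/
noncomputable def laplaceTransform (e : ℝ → E) (x : ℝ) : E := ∫ t, Real.exp (-(x * t)) • e t

theorem laplaceTransform_convolution [CompleteSpace E] [CompleteSpace E'] [CompleteSpace F]
    {a : ℝ → E} {b : ℝ → E'} (ha : CompactlyIntegrable a) (hb : CompactlyIntegrable b)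
    (L : E →L[ℝ] E' →L[ℝ] F) (x : ℝ) :
    laplaceTransform (a ⋆[L] b) x = L (laplaceTransform a x) (laplaceTransform b x) := by
  have hw : Continuous fun t ↦ Real.exp (-(x * t)) := by fun_prop
  unfold laplaceTransform
  rw [← integral_convolution L (ha.smul hw).integrable (hb.smul hw).integrable]
  congr 1 with t
  simp only [convolution_def, ← integral_smul]
  congr 1 with s
  have hexp : Real.exp (-(x * t)) = Real.exp (-(x * s)) * Real.exp (-(x * (t - s))) := by
    rw [← Real.exp_add]; ring_nf
  rw [hexp, map_smul, map_smul, smul_apply, smul_smul, mul_comm]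

theorem smul_convolution_ae_eq {a : ℝ → E} {b : ℝ → E'} (ha : CompactlyIntegrable a)
    (hb : CompactlyIntegrable b) (L : E →L[ℝ] E' →L[ℝ] F) :
    (fun t ↦ t • (a ⋆[L] b) t) =ᵐ[volume]
      ((fun t ↦ t • a t) ⋆[L] b) + (a ⋆[L] fun t ↦ t • b t) := by
  have ha' : CompactlyIntegrable fun t ↦ t • a t := ha.smul continuous_id
  have hb' : CompactlyIntegrable fun t ↦ t • b t := hb.smul continuous_id
  filter_upwards [ha'.integrable.ae_convolution_exists L hb.integrable,
    ha.integrable.ae_convolution_exists L hb'.integrable] with t hat hbt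
  simp only [Pi.add_apply, convolution_def]
  rw [← integral_smul, ← integral_add hat.integrable hbt.integrable]
  congr 1 with s
  simp only [map_smul, smul_apply, ← add_smul, add_sub_cancel]

theorem laplaceTransform_smul_convolution [CompleteSpace E] [CompleteSpace E'] [CompleteSpace F]
    {a : ℝ → E} {b : ℝ → E'} (ha : CompactlyIntegrable a) (hb : CompactlyIntegrable b)
    (L : E →L[ℝ] E' →L[ℝ] F) (x : ℝ) :
    laplaceTransform (fun t ↦ t • (a ⋆[L] b) t) x =
      L (laplaceTransform (fun t ↦ t • a t) x) (laplaceTransform b x) +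
        L (laplaceTransform a x) (laplaceTransform (fun t ↦ t • b t) x) := by
  have ha' : CompactlyIntegrable fun t ↦ t • a t := ha.smul continuous_id
  have hb' : CompactlyIntegrable fun t ↦ t • b t := hb.smul continuous_id
  have hw : Continuous fun t ↦ Real.exp (-(x * t)) := by fun_prop
  rw [← laplaceTransform_convolution ha' hb, ← laplaceTransform_convolution ha hb']
  unfold laplaceTransform
  rw [← integral_add ((ha'.convolution hb L).smul hw).integrable
    ((ha.convolution hb' L).smul hw).integrable]
  refine integral_congr_ae ?_
  filter_upwards [smul_convolution_ae_eq ha hb L] with t ht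
  rw [ht, Pi.add_apply, smul_add]

theorem VanishesBelow.isBigO_laplaceTransform {e : ℝ → E} {c : ℝ} (h : VanishesBelow e c)
    (he : Integrable e) : laplaceTransform e =O[atTop] fun x ↦ Real.exp (-(c * x)) := by
  refine IsBigO.of_bound (∫ t, ‖e t‖) ?_
  filter_upwards [eventually_ge_atTop 0] with x hx
  rw [Real.norm_of_nonneg (Real.exp_nonneg _), ← integral_mul_const]
  refine norm_integral_le_of_norm_le (he.norm.mul_const _) ?_
  filter_upwards [h] with t ht
  rcases lt_or_ge t c with htc | htc
  · simp [ht htc]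
  · rw [norm_smul, Real.norm_of_nonneg (Real.exp_nonneg _), mul_comm, mul_comm x]
    gcongr

theorem tendsto_integral_exp_neg_exp_smul {e : ℝ → E} (he : Integrable e) (τ : ℝ) :
    Tendsto (fun x : ℝ ↦ ∫ t, Real.exp (-Real.exp (x * (τ - t))) • e t) atTop
      (𝓝 (∫ t in Ioi τ, e t)) := by
  rw [← integral_indicator measurableSet_Ioi]
  refine tendsto_integral_filter_of_dominated_convergence (fun t ↦ ‖e t‖)
    (Eventually.of_forall fun x ↦ (Continuous.aestronglyMeasurable (by fun_prop)).smul he.1)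
    (Eventually.of_forall fun x ↦ Eventually.of_forall fun t ↦ ?_) he.norm ?_
  · rw [norm_smul, Real.norm_of_nonneg (Real.exp_nonneg _)]
    exact mul_le_of_le_one_left (norm_nonneg _)
      (Real.exp_le_one_iff.2 (neg_nonpos.2 (Real.exp_nonneg _)))
  · filter_upwards [Measure.ae_ne volume τ] with t htτ
    rcases lt_or_gt_of_ne htτ with ht | ht
    · have hlim : Tendsto (fun x : ℝ ↦ Real.exp (-Real.exp (x * (τ - t)))) atTop (𝓝 0) :=
        Real.tendsto_exp_atBot.comp <| tendsto_neg_atTop_atBot.comp <|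
          Real.tendsto_exp_atTop.comp <| tendsto_id.atTop_mul_const (sub_pos.2 ht)
      simpa [indicator_of_notMem (notMem_Ioi.2 ht.le)] using hlim.smul_const (e t)
    · have hlim : Tendsto (fun x : ℝ ↦ Real.exp (x * (τ - t))) atTop (𝓝 0) :=
        Real.tendsto_exp_atBot.comp <| tendsto_id.atTop_mul_const_of_neg (sub_neg.2 ht)
      simpa [indicator_of_mem (mem_Ioi.2 ht)] using (hlim.neg.rexp).smul_const (e t)

theorem integral_neg_exp_pow_div_factorial_smul (e : ℝ → E) (x τ : ℝ) (n : ℕ) :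
    ∫ t, ((-Real.exp (x * (τ - t))) ^ n / n !) • e t =
      ((-1) ^ n * Real.exp (n * x * τ) / n !) • laplaceTransform e (n * x) := by
  rw [laplaceTransform, ← integral_smul]
  congr 1 with t
  have hexp : Real.exp (x * (τ - t)) ^ n = Real.exp (n * x * τ) * Real.exp (-(n * x * t)) := by
    rw [← Real.exp_nat_mul, ← Real.exp_add]; ring_nf
  rw [smul_smul, neg_pow, hexp]
  ring_nf

theorem norm_integral_exp_neg_exp_smul_sub_integral_le {e : ℝ → E} (he : CompactlyIntegrable e)
    {C m x τ : ℝ} (hx : 0 ≤ x)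
    (hC : ∀ y, x ≤ y → ‖laplaceTransform e y‖ ≤ C * Real.exp (-(m * y))) :
    ‖(∫ t, Real.exp (-Real.exp (x * (τ - t))) • e t) - ∫ t, e t‖ ≤
      C * (Real.exp (Real.exp ((τ - m) * x)) - 1) := by
  have hseries := he.hasSum_integral_pow_div_factorial_smul
    (w := fun t ↦ -Real.exp (x * (τ - t))) (by fun_prop)
  have htail := (hasSum_nat_add_iff' 1).2 hseries
  have hexp := NormedSpace.expSeries_div_hasSum_exp (𝔸 := ℝ) (Real.exp ((τ - m) * x))
  have hexpTail := ((hasSum_nat_add_iff' 1).2 hexp).mul_left C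
  simp only [Finset.range_one, Finset.sum_singleton, pow_zero, Nat.factorial_zero, Nat.cast_one,
    div_one, one_smul, ← Real.exp_eq_exp_ℝ] at htail hexpTail
  refine htail.norm_le_of_bounded hexpTail fun n ↦ ?_
  rw [integral_neg_exp_pow_div_factorial_smul, norm_smul, norm_div, norm_mul, norm_pow, norm_neg,
    norm_one, one_pow, one_mul, Real.norm_natCast, Real.norm_of_nonneg (Real.exp_nonneg _)]
  have hle : x ≤ (n + 1 : ℕ) * x := le_mul_of_one_le_left hx (by simp)
  calc Real.exp ((n + 1 : ℕ) * x * τ) / (n + 1)! * ‖laplaceTransform e ((n + 1 : ℕ) * x)‖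
      ≤ Real.exp ((n + 1 : ℕ) * x * τ) / (n + 1)! *
          (C * Real.exp (-(m * ((n + 1 : ℕ) * x)))) := by gcongr; exact hC _ hle
    _ = C * (Real.exp ((n + 1 : ℕ) * x * τ + -(m * ((n + 1 : ℕ) * x))) / (n + 1)!) := by
      rw [Real.exp_add]; ring
    _ = C * (Real.exp ((τ - m) * x) ^ (n + 1) / (n + 1)!) := by
      rw [← Real.exp_nat_mul]; ring_nf

theorem setIntegral_Iic_eq_zero_of_isBigO_laplaceTransform {e : ℝ → E}
    (he : CompactlyIntegrable e) {m τ : ℝ}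
    (h : laplaceTransform e =O[atTop] fun x ↦ Real.exp (-(m * x))) (hτ : τ < m) :
    ∫ t in Iic τ, e t = 0 := by
  obtain ⟨C, hC⟩ := h.bound
  have hdecay : ∀ᶠ x in atTop, ‖laplaceTransform e x‖ ≤ C * Real.exp (-(m * x)) := by
    simpa only [Real.norm_of_nonneg (Real.exp_nonneg _)] using hC
  have hbound : ∀ᶠ x : ℝ in atTop,
      ‖(∫ t, Real.exp (-Real.exp (x * (τ - t))) • e t) - ∫ t, e t‖ ≤
        C * (Real.exp (Real.exp ((τ - m) * x)) - 1) := by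
    filter_upwards [eventually_forall_ge_atTop.2 hdecay, eventually_ge_atTop 0] with x hdecay hx
    exact norm_integral_exp_neg_exp_smul_sub_integral_le he hx hdecay
  have hlim : Tendsto (fun x : ℝ ↦ C * (Real.exp (Real.exp ((τ - m) * x)) - 1)) atTop (𝓝 0) := by
    have hinner : Tendsto (fun x : ℝ ↦ Real.exp ((τ - m) * x)) atTop (𝓝 0) :=
      Real.tendsto_exp_atBot.comp <| tendsto_id.const_mul_atTop_of_neg (sub_neg.2 hτ)
    simpa using (hinner.rexp.sub_const 1).const_mul C
  have hIoi : ∫ t in Ioi τ, e t = ∫ t, e t :=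
    tendsto_nhds_unique (tendsto_integral_exp_neg_exp_smul he.integrable τ) <|
      tendsto_iff_norm_sub_tendsto_zero.2 <|
        squeeze_zero' (Eventually.of_forall fun _ ↦ norm_nonneg _) hbound hlim
  have hsplit := intervalIntegral.integral_Iic_add_Ioi (b := τ) he.integrable.integrableOn
    he.integrable.integrableOn
  rwa [hIoi, add_eq_right] at hsplit

theorem vanishesBelow_iff_isBigO_laplaceTransform [CompleteSpace E] {e : ℝ → E}
    (he : CompactlyIntegrable e) {m : ℝ} :
    VanishesBelow e m ↔ laplaceTransform e =O[atTop] fun x ↦ Real.exp (-(m * x)) :=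
  ⟨fun h ↦ h.isBigO_laplaceTransform he.integrable, fun h ↦
    vanishesBelow_of_forall_setIntegral_Iic_eq_zero he.integrable fun _ hτ ↦
      setIntegral_Iic_eq_zero_of_isBigO_laplaceTransform he h hτ⟩

theorem ae_eq_zero_of_forall_integral_pow_smul_eq_zero [CompleteSpace E] {e : ℝ → E}
    (he : CompactlyIntegrable e) (h : ∀ n : ℕ, ∫ t, t ^ n • e t = 0) : e =ᵐ[volume] 0 := by
  have hlaplace : laplaceTransform e = 0 := by
    ext x
    refine (he.hasSum_integral_pow_div_factorial_smul
      (w := fun t ↦ -(x * t)) (by fun_prop)).unique ?_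
    have hterm (n : ℕ) : ∫ t, ((-(x * t)) ^ n / n !) • e t = 0 := by
      calc ∫ t, ((-(x * t)) ^ n / n !) • e t = ∫ t, ((-x) ^ n / n !) • t ^ n • e t := by
            congr 1 with t
            rw [smul_smul]
            ring_nf
        _ = 0 := by rw [integral_smul, h, smul_zero]
    simpa only [hterm, Pi.zero_apply] using hasSum_zero
  have hbelow (n : ℕ) : VanishesBelow e n :=
    (vanishesBelow_iff_isBigO_laplaceTransform he).2 (hlaplace ▸ isBigO_zero _ _)
  filter_upwards [ae_all_iff.2 hbelow] with t ht
  obtain ⟨n, hn⟩ := exists_nat_gt t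
  exact ht n hn

/-- The function `t ↦ tⁱ e(t)`, whose convolutions with `b` are the moments of
`s ↦ e(s) b(t - s)`. -/
def powSMul (i : ℕ) (e : ℝ → E) : ℝ → E := fun t ↦ t ^ i • e t

theorem powSMul_zero (e : ℝ → E) : powSMul 0 e = e := by
  ext t
  simp [powSMul]

theorem powSMul_succ (i : ℕ) (e : ℝ → E) : powSMul (i + 1) e = fun t ↦ t • powSMul i e t := by
  ext t
  simp only [powSMul, smul_smul, pow_succ']

theorem CompactlyIntegrable.powSMul {e : ℝ → E} (he : CompactlyIntegrable e) (i : ℕ) :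
    CompactlyIntegrable (powSMul i e) :=
  he.smul (continuous_pow i)

section RCLike

variable {𝕜 : Type*} [RCLike 𝕜] {a b : ℝ → 𝕜}

theorem convolution_mul_comm (a b : ℝ → 𝕜) : a ⋆[mul ℝ 𝕜] b = b ⋆[mul ℝ 𝕜] a := by
  rw [← convolution_flip, ContinuousLinearMap.flip_mul]

/- Write `P`, `Q` for the Laplace transforms of `(t a) ∗ b`, `a ∗ (t b)`. Then `P + Q` and `P Q` are
controlled by `a ∗ b` and `(t a) ∗ (t b)`, and `P ^ 2 = P (P + Q) - P Q`. -/
theorem vanishesBelow_smul_convolution_midpoint (ha : CompactlyIntegrable a)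
    (hb : CompactlyIntegrable b) {x w : ℝ} (hx : VanishesBelow (a ⋆[mul ℝ 𝕜] b) x)
    (hw : VanishesBelow ((fun t ↦ t • a t) ⋆[mul ℝ 𝕜] b) w)
    (hw' : VanishesBelow ((fun t ↦ t • a t) ⋆[mul ℝ 𝕜] fun t ↦ t • b t) w) :
    VanishesBelow ((fun t ↦ t • a t) ⋆[mul ℝ 𝕜] b) ((x + w) / 2) := by
  have ha' : CompactlyIntegrable fun t ↦ t • a t := ha.smul continuous_id
  have hb' : CompactlyIntegrable fun t ↦ t • b t := hb.smul continuous_id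
  have hab := ha.convolution hb (mul ℝ 𝕜)
  have hab' : CompactlyIntegrable fun t ↦ t • (a ⋆[mul ℝ 𝕜] b) t := hab.smul continuous_id
  have hx' : VanishesBelow (fun t ↦ t • (a ⋆[mul ℝ 𝕜] b) t) x := hx.smul id
  rw [vanishesBelow_iff_isBigO_laplaceTransform (ha'.convolution hb _)] at hw ⊢
  rw [vanishesBelow_iff_isBigO_laplaceTransform hab] at hx
  rw [vanishesBelow_iff_isBigO_laplaceTransform hab'] at hx'
  rw [vanishesBelow_iff_isBigO_laplaceTransform (ha'.convolution hb' _)] at hw'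
  refine IsBigO.of_pow two_ne_zero (((hw.mul hx').sub (hw'.mul hx)).congr (fun y ↦ ?_) fun y ↦ ?_)
  · simp only [laplaceTransform_smul_convolution ha hb, laplaceTransform_convolution ha' hb,
      laplaceTransform_convolution ha hb, laplaceTransform_convolution ha' hb',
      ContinuousLinearMap.mul_apply', Pi.pow_apply]
    ring
  · rw [Pi.pow_apply, ← Real.exp_add, ← Real.exp_nat_mul]
    ring_nf

/-- The points below which all the convolutions `(tⁱ a) ∗ (tʲ b)` with `i + j ≤ n` vanish; its upper
end is the sequence in `n` to which the concavity argument applies. -/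
def vanishingLevels (a b : ℝ → 𝕜) (n : ℕ) : Set ℝ :=
  {c | ∀ i j, i + j ≤ n → VanishesBelow (powSMul i a ⋆[mul ℝ 𝕜] powSMul j b) c}

theorem isClosed_vanishingLevels (a b : ℝ → 𝕜) (n : ℕ) : IsClosed (vanishingLevels a b n) := by
  simp only [vanishingLevels, ofPred_forall]
  exact isClosed_iInter fun i ↦ isClosed_iInter fun j ↦ isClosed_iInter fun _ ↦
    isClosed_setOf_vanishesBelow _

theorem vanishingLevels_antitone (a b : ℝ → 𝕜) : Antitone (vanishingLevels a b) :=
  fun _ _ hmn _ hc i j hij ↦ hc i j (hij.trans hmn)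

theorem exists_forall_le_mem_vanishingLevels (ha : HasCompactSupport a)
    (hb : HasCompactSupport b) : ∃ r, ∀ c ≤ r, ∀ n, c ∈ vanishingLevels a b n := by
  obtain ⟨p, hp⟩ := exists_vanishesBelow_of_hasCompactSupport ha
  obtain ⟨q, hq⟩ := exists_vanishesBelow_of_hasCompactSupport hb
  exact ⟨p + q, fun c hc n i j _ ↦ ((hp.smul _).convolution (hq.smul _) _).mono hc⟩

theorem midpoint_mem_vanishingLevels (ha : CompactlyIntegrable a) (hb : CompactlyIntegrable b)
    {n : ℕ} {x w : ℝ} (hx : x ∈ vanishingLevels a b n) (hw : w ∈ vanishingLevels a b (n + 2))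
    (hwx : w ≤ x) : (x + w) / 2 ∈ vanishingLevels a b (n + 1) := by
  rintro (_ | i) j hij
  · rcases j with _ | j
    · exact (hx 0 0 (Nat.zero_le n)).mono (by linarith)
    · have hx := hx 0 j (by omega)
      have hw₁ := hw 0 (j + 1) (by omega)
      have hw₂ := hw 1 (j + 1) (by omega)
      rw [convolution_mul_comm] at hx hw₁ hw₂ ⊢
      rw [powSMul_succ] at hw₁ hw₂ ⊢
      rw [powSMul_succ] at hw₂
      exact vanishesBelow_smul_convolution_midpoint (hb.powSMul j) (ha.powSMul 0) hx hw₁ hw₂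
  · have hx := hx i j (by omega)
    have hw₁ := hw (i + 1) j (by omega)
    have hw₂ := hw (i + 1) (j + 1) (by omega)
    rw [powSMul_succ] at hw₁ hw₂ ⊢
    rw [powSMul_succ] at hw₂
    exact vanishesBelow_smul_convolution_midpoint (ha.powSMul i) (hb.powSMul j) hx hw₁ hw₂

theorem mem_vanishingLevels_of_mem_zero (ha : CompactlyIntegrable a) (hb : CompactlyIntegrable b)
    {T : ℝ} (hT : T ∈ vanishingLevels a b 0) (n : ℕ) : T ∈ vanishingLevels a b n := by
  set V : ℕ → Set ℝ := fun n ↦ vanishingLevels a b n ∩ Iic T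
  obtain ⟨r, hr⟩ := exists_forall_le_mem_vanishingLevels ha.hasCompactSupport hb.hasCompactSupport
  have hrV (n : ℕ) : min r T ∈ V n := ⟨hr _ (min_le_left r T) n, min_le_right r T⟩
  have hbdd (n : ℕ) : BddAbove (V n) := bddAbove_Iic.mono inter_subset_right
  have hmem (n : ℕ) : sSup (V n) ∈ V n :=
    ((isClosed_vanishingLevels a b n).inter isClosed_Iic).csSup_mem ⟨_, hrV n⟩ (hbdd n)
  have hmono : Monotone fun n ↦ sSup (V n) := by
    refine monotone_of_add_le_two_mul_of_bddBelow (fun n ↦ ?_)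
      ⟨min r T, forall_mem_range.2 fun n ↦ le_csSup (hbdd n) (hrV n)⟩
    have hle : sSup (V (n + 2)) ≤ sSup (V n) := csSup_le_csSup (hbdd n) ⟨_, hrV (n + 2)⟩
      (inter_subset_inter_left _ (vanishingLevels_antitone a b (Nat.le_add_right n 2)))
    have hleT : sSup (V n) ≤ T := (hmem n).2
    have hmid : (sSup (V n) + sSup (V (n + 2))) / 2 ≤ sSup (V (n + 1)) :=
      le_csSup (hbdd (n + 1)) ⟨midpoint_mem_vanishingLevels ha hb (hmem n).1 (hmem (n + 2)).1 hle,
        mem_Iic.2 (by linarith)⟩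
    linarith
  have hTle : T ≤ sSup (V n) := (le_csSup (hbdd 0) ⟨hT, self_mem_Iic⟩).trans (hmono (Nat.zero_le n))
  exact le_antisymm (hmem n).2 hTle ▸ (hmem n).1

theorem ae_ae_mul_eq_zero_of_vanishesBelow_convolution (ha : CompactlyIntegrable a)
    (hb : CompactlyIntegrable b) {T : ℝ} (h : VanishesBelow (a ⋆[mul ℝ 𝕜] b) T) :
    ∀ᵐ t, t < T → ∀ᵐ s, a s * b (t - s) = 0 := by
  have hT : T ∈ vanishingLevels a b 0 := by
    rintro i j hij
    obtain ⟨rfl, rfl⟩ : i = 0 ∧ j = 0 := by omega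
    simpa only [powSMul_zero] using h
  have hmoments (i : ℕ) : VanishesBelow (powSMul i a ⋆[mul ℝ 𝕜] b) T := by
    simpa only [powSMul_zero] using mem_vanishingLevels_of_mem_zero ha hb hT i i 0 le_rfl
  filter_upwards [ae_all_iff.2 hmoments,
    ha.integrable.ae_convolution_exists (mul ℝ 𝕜) hb.integrable] with t hmt hint htT
  refine ae_eq_zero_of_forall_integral_pow_smul_eq_zero
    ⟨hint, ha.hasCompactSupport.mul_right⟩ fun i ↦ ?_
  simpa only [convolution_def, powSMul, map_smul, smul_apply, ContinuousLinearMap.mul_apply']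
    using hmt i htT

theorem vanishesBelow_or_vanishesBelow_sub (ha : CompactlyIntegrable a)
    (hb : CompactlyIntegrable b) {T : ℝ} (h : VanishesBelow (a ⋆[mul ℝ 𝕜] b) T) (c : ℝ) :
    VanishesBelow a c ∨ VanishesBelow b (T - c) := by
  refine or_iff_not_imp_left.2 fun hac ↦ ?_
  have hmeas : AEStronglyMeasurable (fun p : ℝ × ℝ ↦ a p.2 * b (p.1 - p.2))
      ((volume.restrict (Iio T)).prod volume) :=
    (ha.integrable.convolution_integrand (mul ℝ 𝕜) hb.integrable).1.mono_ac
      (Measure.restrict_le_self.absolutelyContinuous.prod .rfl)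
  have hswap : ∀ᵐ s, ∀ᵐ t ∂volume.restrict (Iio T), a s * b (t - s) = 0 :=
    ae_ae_eq_zero_swap hmeas <| (ae_restrict_iff' measurableSet_Iio).2 <|
      ae_ae_mul_eq_zero_of_vanishesBelow_convolution ha hb h
  obtain ⟨s, hs, hbs⟩ := ((not_eventually.1 hac).and_eventually hswap).exists
  obtain ⟨hsc, has⟩ := Classical.not_imp.1 hs
  rw [ae_restrict_iff' measurableSet_Iio] at hbs
  filter_upwards [(measurePreserving_add_right volume s).quasiMeasurePreserving.ae hbs]
    with t ht htT
  simpa [has] using ht (show t + s < T by linarith)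

theorem exists_vanishesBelow_and_vanishesBelow_sub (ha : CompactlyIntegrable a)
    (hb : CompactlyIntegrable b) {p q T : ℝ} (h : VanishesBelow (a ⋆[mul ℝ 𝕜] b) T)
    (hp : VanishesBelow a p) (hq : VanishesBelow b q) (hpq : p + q ≤ T) :
    ∃ c ∈ Icc p (T - q), VanishesBelow a c ∧ VanishesBelow b (T - c) := by
  have hle : p ≤ T - q := le_sub_iff_add_le.2 hpq
  refine isPreconnected_closed_iff.1 isPreconnected_Icc {c | VanishesBelow a c}
    {c | VanishesBelow b (T - c)} (isClosed_setOf_vanishesBelow a)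
    ((isClosed_setOf_vanishesBelow b).preimage (continuous_const.sub continuous_id))
    (fun c _ ↦ vanishesBelow_or_vanishesBelow_sub ha hb h c)
    ⟨p, left_mem_Icc.2 hle, hp⟩ ⟨T - q, right_mem_Icc.2 hle, ?_⟩
  simpa only [mem_ofPred_eq, sub_sub_cancel] using hq

end RCLike

theorem indicator_Icc_convolution_indicator_Icc (f : ℝ → E) (g : ℝ → E') (L : E →L[ℝ] E' →L[ℝ] F)
    {b t : ℝ} (ht : t ∈ Icc 0 b) :
    ((Icc 0 b).indicator f ⋆[L] (Icc 0 b).indicator g) t = ∫ s in 0..t, L (f (t - s)) (g s) := by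
  rw [convolution_eq_swap, intervalIntegral.integral_of_le ht.1, ← integral_Icc_eq_integral_Ioc,
    ← integral_indicator measurableSet_Icc]
  congr 1 with s
  by_cases hs : s ∈ Icc 0 t
  · have hsb : s ∈ Icc 0 b := ⟨hs.1, hs.2.trans ht.2⟩
    have htsb : t - s ∈ Icc 0 b := ⟨sub_nonneg.2 hs.2, (sub_le_self t hs.1).trans ht.2⟩
    simp only [indicator_of_mem hs, indicator_of_mem hsb, indicator_of_mem htsb]
  · rw [indicator_of_notMem hs]
    rcases lt_or_ge s 0 with hs0 | hs0
    · rw [indicator_of_notMem (fun h ↦ hs0.not_ge h.1) g, map_zero]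
    · rw [indicator_of_notMem (fun h ↦ hs ⟨hs0, sub_nonneg.1 h.1⟩) f, map_zero, zero_apply]

theorem titchmarsh_general {𝕜 : Type*} [RCLike 𝕜] {b : ℝ} (hb : 0 ≤ b) {f g : ℝ → 𝕜}
    (hf : IntegrableOn f (Icc 0 b)) (hg : IntegrableOn g (Icc 0 b))
    (h : ∀ᵐ t ∂volume.restrict (Icc 0 b), ∫ s in 0..t, f (t - s) * g s = 0) :
    ∃ lam mu : ℝ, 0 ≤ lam ∧ 0 ≤ mu ∧ b ≤ lam + mu ∧
      (∀ᵐ t ∂volume.restrict (Icc 0 lam), f t = 0) ∧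
      ∀ᵐ t ∂volume.restrict (Icc 0 mu), g t = 0 := by
  have hf₀ := vanishesBelow_indicator_Icc f 0 b
  have hg₀ := vanishesBelow_indicator_Icc g 0 b
  have hconv : VanishesBelow ((Icc 0 b).indicator f ⋆[mul ℝ 𝕜] (Icc 0 b).indicator g) b := by
    filter_upwards [hf₀.convolution hg₀ (mul ℝ 𝕜), (ae_restrict_iff' measurableSet_Icc).1 h]
      with t hneg hnonneg htb
    rcases lt_or_ge t 0 with ht | ht
    · exact hneg (by linarith)
    · rw [indicator_Icc_convolution_indicator_Icc f g _ ⟨ht, htb.le⟩]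
      exact hnonneg ⟨ht, htb.le⟩
  obtain ⟨c, ⟨hc, hcb⟩, hfc, hgc⟩ := exists_vanishesBelow_and_vanishesBelow_sub
    (compactlyIntegrable_indicator_Icc hf) (compactlyIntegrable_indicator_Icc hg) hconv hf₀ hg₀
    (by simpa using hb)
  rw [sub_zero] at hcb
  exact ⟨c, b - c, hc, sub_nonneg.2 hcb, (add_sub_cancel c b).ge,
    hfc.ae_restrict_Icc_eq_zero hcb, hgc.ae_restrict_Icc_eq_zero (sub_le_self b hc)⟩

end

/-- **Titchmarsh convolution theorem**: if `f, g ∈ L¹[0,b]` and the convolution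
`(f ∗ g)(t) = ∫₀ᵗ f(t-s) g(s) ds` vanishes for a.e. `t ∈ [0,b]`, then there are
`λ, μ ≥ 0` with `λ + μ ≥ b` such that `f ≡ 0` a.e. on `[0,λ]` and `g ≡ 0` a.e. on `[0,μ]`. -/
theorem titchmarsh (b : ℝ) (hb : 0 < b) (f g : ℝ → ℝ)
    (hf : IntegrableOn f (Set.Icc 0 b) volume) (hg : IntegrableOn g (Set.Icc 0 b) volume)
    (h : ∀ᵐ t ∂(volume.restrict (Set.Icc (0:ℝ) b)),
      ∫ s in (0:ℝ)..t, f (t - s) * g s = 0) :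
    ∃ lam mu : ℝ, 0 ≤ lam ∧ 0 ≤ mu ∧ b ≤ lam + mu ∧
      (∀ᵐ t ∂(volume.restrict (Set.Icc (0:ℝ) lam)), f t = 0) ∧
      (∀ᵐ t ∂(volume.restrict (Set.Icc (0:ℝ) mu)), g t = 0) :=
  titchmarsh_general hb.le hf hg h
end

section
/- (Rust.) Let k ∈ L¹[0,b] and let C(k) denote the convolution operator (C(k)v)(t) = ∫₀^t k(t−s) v(s) ds. Assume that: (1) C(k) maps C[0,b] into C[0,b]; and (2) for all sufficiently large positive integers n, the n-fold composition C(k)^n equals C(k̃) for some continuous kernel k̃ ∈ C[0,b]. Then for every w ∈ C[0,b] the Volterra integral equation of the second kind ∫₀^t k(t−s) v(s) ds + v(t) = w(t), t ∈ [0,b], has exactly one continuous solution v ∈ C[0,b]. -/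
open MeasureTheory Set Filter Topology

/-- Convolution (with base point `0`) of a kernel `k` with `v`. -/
noncomputable def Conv (k v : ℝ → ℝ) : ℝ → ℝ := fun t => ∫ s in (0:ℝ)..t, k (t - s) * v s

/-!
For `k ∈ L¹[0,b]` the operator `C(k)` acts on `C[0,b]` with norm at most `∫₀ᵇ |k|`, so if this
integral is below `1` the equation `C(k)v + v = w` is solved by the Neumann series. The general case
reduces to this one by exponential damping: multiplication by `e^{-σt}` turns the equation with data
`k`, `w` into the equation with data `e^{-σt} k`, `e^{-σt} w`, and `∫₀ᵇ e^{-σs} |k(s)| ds → 0` as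
`σ → ∞`.
-/

lemma conv_comm (k v : ℝ → ℝ) : Conv k v = Conv v k := by
  ext t
  have reflect := intervalIntegral.integral_comp_sub_left (a := 0) (b := t)
    (fun s => v (t - s) * k s) t
  simpa only [Conv, sub_sub_cancel, sub_self, sub_zero, mul_comm (v _)] using reflect

lemma conv_congr {k k' v v' : ℝ → ℝ} {b : ℝ} (hk : EqOn k k' (Icc 0 b))
    (hv : EqOn v v' (Icc 0 b)) : EqOn (Conv k v) (Conv k' v') (Icc 0 b) := by
  intro t ht
  refine intervalIntegral.integral_congr fun s hs => ?_
  rw [uIcc_of_le ht.1] at hs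
  simp only [hk ⟨sub_nonneg.2 hs.2, (sub_le_self t hs.1).trans ht.2⟩, hv ⟨hs.1, hs.2.trans ht.2⟩]

lemma intervalIntegrable_comp_sub_left_mul {k v : ℝ → ℝ} {t : ℝ}
    (hk : IntervalIntegrable k volume 0 t) (hv : ContinuousOn v (uIcc 0 t)) :
    IntervalIntegrable (fun s => k (t - s) * v s) volume 0 t := by
  have reflected : IntervalIntegrable (fun s => k (t - s)) volume 0 t := by
    simpa only [sub_zero, sub_self] using (hk.comp_sub_left t).symm
  exact reflected.mul_continuousOn hv

lemma conv_add {k u v : ℝ → ℝ} {t : ℝ} (hk : IntervalIntegrable k volume 0 t)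
    (hu : ContinuousOn u (uIcc 0 t)) (hv : ContinuousOn v (uIcc 0 t)) :
    Conv k (u + v) t = Conv k u t + Conv k v t := by
  simp only [Conv, Pi.add_apply, mul_add]
  exact intervalIntegral.integral_add (intervalIntegrable_comp_sub_left_mul hk hu)
    (intervalIntegrable_comp_sub_left_mul hk hv)

lemma conv_smul (c : ℝ) (k v : ℝ → ℝ) : Conv k (c • v) = c • Conv k v := by
  ext t
  simp only [Conv, Pi.smul_apply, smul_eq_mul, mul_left_comm _ c,
    intervalIntegral.integral_const_mul]

lemma conv_exp_mul (σ : ℝ) (k v : ℝ → ℝ) :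
    Conv (fun s => Real.exp (σ * s) * k s) (fun s => Real.exp (σ * s) * v s) =
      fun t => Real.exp (σ * t) * Conv k v t := by
  ext t
  rw [Conv, Conv, ← intervalIntegral.integral_const_mul]
  congr 1 with s
  have exp_split : Real.exp (σ * t) = Real.exp (σ * (t - s)) * Real.exp (σ * s) := by
    rw [← Real.exp_add]; ring_nf
  rw [exp_split]; ring

lemma abs_conv_le {k v : ℝ → ℝ} {b t C : ℝ} (hk : IntegrableOn k (Icc 0 b))
    (ht : t ∈ Icc 0 b) (hv : ∀ s ∈ Icc 0 b, |v s| ≤ C) :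
    |Conv k v t| ≤ (∫ s in (0 : ℝ)..b, |k s|) * C := by
  have hC : 0 ≤ C := (abs_nonneg _).trans (hv t ht)
  have hkb : IntervalIntegrable (fun s => |k s|) volume 0 b :=
    ((intervalIntegrable_iff_integrableOn_Icc_of_le (ht.1.trans ht.2)).2 hk).abs
  have hkt : IntervalIntegrable (fun s => |k s|) volume 0 t :=
    hkb.mono_set (uIcc_subset_uIcc_left (Icc_subset_uIcc ht))
  rw [conv_comm, ← Real.norm_eq_abs]
  calc ‖∫ s in (0 : ℝ)..t, v (t - s) * k s‖
      ≤ ∫ s in (0 : ℝ)..t, C * |k s| := by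
        refine intervalIntegral.norm_integral_le_of_norm_le ht.1 (.of_forall fun s hs => ?_)
          (hkt.const_mul C)
        rw [norm_mul]
        exact mul_le_mul_of_nonneg_right
          (hv _ ⟨sub_nonneg.2 hs.2, (sub_le_self t hs.1.le).trans ht.2⟩) (norm_nonneg _)
    _ = (∫ s in (0 : ℝ)..t, |k s|) * C := by
        rw [intervalIntegral.integral_const_mul, mul_comm]
    _ ≤ (∫ s in (0 : ℝ)..b, |k s|) * C := by
        gcongr
        exact intervalIntegral.integral_mono_interval le_rfl ht.1 ht.2
          (.of_forall fun s => abs_nonneg _) hkb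

lemma continuous_conv {k v : ℝ → ℝ} (hk : LocallyIntegrable k) (hv : Continuous v) :
    Continuous (Conv k v) := by
  rw [conv_comm, continuous_iff_continuousAt]
  intro t₀
  obtain ⟨a, ha⟩ := exists_lt (min 0 t₀)
  obtain ⟨c, hc⟩ := exists_gt (max 0 t₀)
  rw [lt_min_iff] at ha
  rw [max_lt_iff] at hc
  have hkI : IntervalIntegrable k volume a c :=
    (hk.integrableOn_isCompact isCompact_uIcc).intervalIntegrable
  obtain ⟨C, hC⟩ : ∃ C, ∀ s ∈ Icc (t₀ - 1 - c) (t₀ + 1 - a), ‖v s‖ ≤ C :=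
    isCompact_Icc.exists_bound_of_continuousOn hv.continuousOn
  have joint :
      ContinuousAt (fun p : ℝ × ℝ => ∫ s in (0 : ℝ)..p.2, v (p.1 - s) * k s) (t₀, t₀) := by
    refine intervalIntegral.continuousAt_parametric_primitive_of_dominated
      (F := fun t s => v (t - s) * k s) (fun s => C * |k s|) a c (fun t => ?_) ?_
      (hkI.abs.const_mul C) (.of_forall fun s => by fun_prop)
      ⟨ha.1, hc.1⟩ ⟨ha.2, hc.2⟩ (measure_singleton t₀)
    · exact (hv.comp (continuous_sub_left t)).aestronglyMeasurable.mul
        hkI.aestronglyMeasurable_restrict_uIoc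
    · filter_upwards [Icc_mem_nhds (sub_one_lt t₀) (lt_add_one t₀)] with t ht
      refine (ae_restrict_mem measurableSet_uIoc).mono fun s hs => ?_
      rw [uIoc_of_le (ha.1.trans hc.1).le] at hs
      rw [norm_mul]
      exact mul_le_mul_of_nonneg_right
        (hC _ ⟨sub_le_sub ht.1 hs.2, sub_le_sub ht.2 hs.1.le⟩) (norm_nonneg _)
  exact joint.comp (f := fun t : ℝ => (t, t)) (by fun_prop)

lemma continuousOn_conv {k v : ℝ → ℝ} {b : ℝ} (hb : 0 ≤ b) (hk : IntegrableOn k (Icc 0 b))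
    (hv : ContinuousOn v (Icc 0 b)) : ContinuousOn (Conv k v) (Icc 0 b) := by
  have extended : Continuous
      (Conv ((Icc 0 b).indicator k) (IccExtend hb ((Icc 0 b).domRestrict v))) :=
    continuous_conv (hk.integrable_indicator measurableSet_Icc).locallyIntegrable
      hv.domRestrict.Icc_extend'
  exact extended.continuousOn.congr
    (conv_congr (fun _ hs => (indicator_of_mem hs k).symm)
      fun _ hs => (IccExtend_of_mem hb ((Icc 0 b).domRestrict v) hs).symm)

/-- The convolution operator `C(k)` on the Banach space `C[0,b]`. Elements of `C[0,b]` are extended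
constantly to `ℝ`; only their values on `[0,b]` enter `Conv`. -/
noncomputable def convOperator {b : ℝ} (hb : 0 ≤ b) {k : ℝ → ℝ} (hk : IntegrableOn k (Icc 0 b)) :
    C(Icc 0 b, ℝ) →L[ℝ] C(Icc 0 b, ℝ) :=
  LinearMap.mkContinuous
    { toFun := fun v => ⟨(Icc 0 b).domRestrict (Conv k (v.IccExtend hb)),
        (continuousOn_conv hb hk (v.IccExtend hb).continuous.continuousOn).domRestrict⟩
      map_add' := fun u v => by
        ext t
        have hkt : IntervalIntegrable k volume 0 t :=
          (intervalIntegrable_iff_integrableOn_Icc_of_le t.2.1).2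
            (hk.mono_set (Icc_subset_Icc_right t.2.2))
        exact conv_add hkt (u.IccExtend hb).continuous.continuousOn
          (v.IccExtend hb).continuous.continuousOn
      map_smul' := fun c v => by
        ext t
        exact congrFun (conv_smul c k (v.IccExtend hb)) t }
    (∫ s in (0 : ℝ)..b, |k s|) fun v =>
      (ContinuousMap.norm_le _ (mul_nonneg
        (intervalIntegral.integral_nonneg hb fun _ _ => abs_nonneg _) (norm_nonneg v))).2
        fun t => abs_conv_le hk t.2 fun _ _ => v.norm_coe_le_norm _

lemma norm_convOperator_le {b : ℝ} (hb : 0 ≤ b) {k : ℝ → ℝ} (hk : IntegrableOn k (Icc 0 b)) :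
    ‖convOperator hb hk‖ ≤ ∫ s in (0 : ℝ)..b, |k s| :=
  LinearMap.mkContinuous_norm_le _
    (intervalIntegral.integral_nonneg hb fun _ _ => abs_nonneg _) _

lemma convOperator_domRestrict_apply {b : ℝ} (hb : 0 ≤ b) {k v : ℝ → ℝ}
    (hk : IntegrableOn k (Icc 0 b)) (hv : ContinuousOn v (Icc 0 b)) (t : Icc 0 b) :
    convOperator hb hk ⟨(Icc 0 b).domRestrict v, hv.domRestrict⟩ t = Conv k v t :=
  conv_congr (fun _ _ => rfl) (fun _ hs => IccExtend_of_mem hb ((Icc 0 b).domRestrict v) hs) t.2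

lemma bijective_one_add_of_norm_lt_one {𝕜 E : Type*} [NontriviallyNormedField 𝕜]
    [NormedAddCommGroup E] [NormedSpace 𝕜 E] [CompleteSpace E] {T : E →L[𝕜] E} (hT : ‖T‖ < 1) :
    Function.Bijective (1 + T : E →L[𝕜] E) := by
  have isUnit : IsUnit (1 - -T) := isUnit_one_sub_of_norm_lt_one (by rwa [norm_neg])
  rw [sub_neg_eq_add] at isUnit
  exact ContinuousLinearMap.isUnit_iff_bijective.1 isUnit

/-- `v` is a continuous solution on `[0,b]` of the Volterra equation of the second kind
`C(k)v + v = w`. Functions on `[0,b]` are encoded as functions on `ℝ`, of which only the restriction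
to `[0,b]` matters. -/
structure IsVolterraSolution (b : ℝ) (k w v : ℝ → ℝ) : Prop where
  continuousOn : ContinuousOn v (Icc 0 b)
  conv_add_eq : ∀ t ∈ Icc 0 b, Conv k v t + v t = w t

namespace IsVolterraSolution

variable {b : ℝ} {k w v : ℝ → ℝ}

lemma exp_mul (σ : ℝ) (h : IsVolterraSolution b k w v) :
    IsVolterraSolution b (fun s => Real.exp (σ * s) * k s) (fun s => Real.exp (σ * s) * w s)
      (fun s => Real.exp (σ * s) * v s) where
  continuousOn := ContinuousOn.mul (by fun_prop) h.continuousOn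
  conv_add_eq t ht := by
    rw [conv_exp_mul, ← h.conv_add_eq t ht, mul_add]

lemma iff_one_add_convOperator_apply_eq (hb : 0 ≤ b) (hk : IntegrableOn k (Icc 0 b))
    (hw : ContinuousOn w (Icc 0 b)) (hv : ContinuousOn v (Icc 0 b)) :
    IsVolterraSolution b k w v ↔
      (1 + convOperator hb hk) ⟨(Icc 0 b).domRestrict v, hv.domRestrict⟩ =
        ⟨(Icc 0 b).domRestrict w, hw.domRestrict⟩ := by
  have pointwise (t : Icc 0 b) :
      (1 + convOperator hb hk) ⟨(Icc 0 b).domRestrict v, hv.domRestrict⟩ t = Conv k v t + v t := by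
    rw [← convOperator_domRestrict_apply hb hk hv t, add_comm]
    rfl
  simp only [ContinuousMap.ext_iff, pointwise]
  exact ⟨fun h t => h.conv_add_eq t t.2, fun h => ⟨hv, fun t ht => h ⟨t, ht⟩⟩⟩

lemma exists_unique_of_integral_abs_lt_one (hb : 0 ≤ b) (hk : IntegrableOn k (Icc 0 b))
    (hk_lt : ∫ s in (0 : ℝ)..b, |k s| < 1) (hw : ContinuousOn w (Icc 0 b)) :
    ∃ v, IsVolterraSolution b k w v ∧
      ∀ v', IsVolterraSolution b k w v' → EqOn v' v (Icc 0 b) := by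
  obtain ⟨injective, surjective⟩ :=
    bijective_one_add_of_norm_lt_one ((norm_convOperator_le hb hk).trans_lt hk_lt)
  obtain ⟨V, hV⟩ := surjective ⟨(Icc 0 b).domRestrict w, hw.domRestrict⟩
  have hVc : ContinuousOn (V.IccExtend hb) (Icc 0 b) := (V.IccExtend hb).continuous.continuousOn
  have domRestrict_extend : ⟨(Icc 0 b).domRestrict (V.IccExtend hb), hVc.domRestrict⟩ = V :=
    ContinuousMap.ext fun t => IccExtend_val hb V t
  refine ⟨V.IccExtend hb, ?_, fun v' hv' t ht => ?_⟩
  · rwa [iff_one_add_convOperator_apply_eq hb hk hw hVc, domRestrict_extend]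
  · have hv'V := injective <|
      ((iff_one_add_convOperator_apply_eq hb hk hw hv'.continuousOn).1 hv').trans hV.symm
    exact DFunLike.congr_fun (hv'V.trans domRestrict_extend.symm) ⟨t, ht⟩

end IsVolterraSolution

lemma tendsto_integral_abs_exp_neg_mul_atTop {k : ℝ → ℝ} {b : ℝ} (hb : 0 ≤ b)
    (hk : IntegrableOn k (Icc 0 b)) :
    Tendsto (fun σ : ℝ => ∫ s in (0 : ℝ)..b, |Real.exp (-σ * s) * k s|) atTop (𝓝 0) := by
  have hkI := (intervalIntegrable_iff_integrableOn_Icc_of_le hb).2 hk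
  suffices Tendsto (fun σ : ℝ => ∫ s in (0 : ℝ)..b, |Real.exp (-σ * s) * k s|) atTop
      (𝓝 (∫ _ in (0 : ℝ)..b, 0)) by
    rwa [intervalIntegral.integral_zero] at this
  refine intervalIntegral.tendsto_integral_filter_of_dominated_convergence (fun s => |k s|)
    (.of_forall fun σ => ?_) ?_ hkI.abs (.of_forall fun s hs => ?_)
  · exact (Continuous.aestronglyMeasurable (by fun_prop)).mul
      hkI.aestronglyMeasurable_restrict_uIoc |>.norm
  · filter_upwards [eventually_ge_atTop 0] with σ hσ
    refine .of_forall fun s hs => ?_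
    rw [uIoc_of_le hb] at hs
    have exp_le : Real.exp (-σ * s) ≤ 1 :=
      Real.exp_le_one_iff.2 (mul_nonpos_of_nonpos_of_nonneg (neg_nonpos.2 hσ) hs.1.le)
    rw [Real.norm_eq_abs, abs_abs, abs_mul, Real.abs_exp]
    exact mul_le_of_le_one_left (abs_nonneg _) exp_le
  · rw [uIoc_of_le hb] at hs
    have exp_tendsto : Tendsto (fun σ : ℝ => Real.exp (-σ * s)) atTop (𝓝 0) :=
      Real.tendsto_exp_atBot.comp (tendsto_neg_atTop_atBot.atBot_mul_const hs.1)
    simpa only [zero_mul, abs_zero] using (exp_tendsto.mul_const (k s)).abs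

theorem rust_general {b : ℝ} (hb : 0 ≤ b) {k : ℝ → ℝ} (hk : IntegrableOn k (Icc 0 b))
    {w : ℝ → ℝ} (hw : ContinuousOn w (Icc 0 b)) :
    ∃ v, IsVolterraSolution b k w v ∧
      ∀ v', IsVolterraSolution b k w v' → EqOn v' v (Icc 0 b) := by
  obtain ⟨σ, hσ⟩ :=
    ((tendsto_integral_abs_exp_neg_mul_atTop hb hk).eventually_lt_const one_pos).exists
  have undamp (f : ℝ → ℝ) : (fun s => Real.exp (σ * s) * (Real.exp (-σ * s) * f s)) = f := by
    ext s
    rw [← mul_assoc, ← Real.exp_add, neg_mul, add_neg_cancel, Real.exp_zero, one_mul]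
  obtain ⟨u, hu, hu_unique⟩ := IsVolterraSolution.exists_unique_of_integral_abs_lt_one hb
    (hk.continuousOn_mul (by fun_prop) isCompact_Icc) hσ
    (w := fun s => Real.exp (-σ * s) * w s) (by fun_prop)
  refine ⟨fun s => Real.exp (σ * s) * u s, ?_, fun v' hv' t ht => ?_⟩
  · simpa only [undamp] using hu.exp_mul σ
  · have damped_eq : Real.exp (-σ * t) * v' t = u t := hu_unique _ (hv'.exp_mul (-σ)) ht
    simp only [← damped_eq, congrFun (undamp v') t]

/-- **Rust's theorem** on Volterra integral equations of the second kind: if the convolution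
operator `C(k)` with kernel `k ∈ L¹[0,b]` maps `C[0,b]` into `C[0,b]`, and all sufficiently
large iterates `C(k)ⁿ` are convolution operators with continuous kernels, then for every
continuous `w` the equation `(C(k)v)(t) + v(t) = w(t)` has exactly one continuous solution. -/
theorem rust (b : ℝ) (hb : 0 < b) (k : ℝ → ℝ) (hk : IntegrableOn k (Set.Icc 0 b) volume)
    (h_cont : ∀ h : ℝ → ℝ, ContinuousOn h (Set.Icc 0 b) → ContinuousOn (Conv k h) (Set.Icc 0 b))
    (h_iter : ∃ N : ℕ, ∀ n : ℕ, N ≤ n → ∃ ktil : ℝ → ℝ,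
      ContinuousOn ktil (Set.Icc 0 b) ∧
      ∀ v : ℝ → ℝ, IntegrableOn v (Set.Icc 0 b) volume →
        ∀ t ∈ Set.Icc (0:ℝ) b, (Conv k)^[n] v t = Conv ktil v t) :
    ∀ w : ℝ → ℝ, ContinuousOn w (Set.Icc 0 b) →
      ∃ v : ℝ → ℝ, ContinuousOn v (Set.Icc 0 b) ∧
        (∀ t ∈ Set.Icc (0:ℝ) b, Conv k v t + v t = w t) ∧
        ∀ v' : ℝ → ℝ, ContinuousOn v' (Set.Icc 0 b) →
          (∀ t ∈ Set.Icc (0:ℝ) b, Conv k v' t + v' t = w t) →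
          ∀ t ∈ Set.Icc (0:ℝ) b, v' t = v t := by
  intro w hw
  obtain ⟨v, hv, hv_unique⟩ := rust_general hb.le hk hw
  exact ⟨v, hv.continuousOn, hv.conv_add_eq, fun v' hv' h => hv_unique v' ⟨hv', h⟩⟩
end

section
/- Let α_n > ⋯ > α_1 > 0 and c_1, …, c_n ∈ ℝ, and define Υ = c_n I^{α_n} + ⋯ + c_1 I^{α_1} on L¹[0,b]. Then Υ + Id is an invertible bounded linear map from the Banach space L¹[0,b] to itself whose inverse is also bounded. In particular, for every f ∈ L¹[0,b] the fractional integral equation (Υ + Id)x = f has exactly one solution x ∈ L¹[0,b]. -/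
open MeasureTheory Set Filter Topology

/-!
On `[0, b]` the operator `Υ` is convolution with one integrable kernel `k`, and a convolution
operator on `L¹[0, b]` has norm at most `‖k‖₁`. Conjugating by multiplication with `exp (-r t)`
replaces `k u` by `exp (-r u) k u`, whose `L¹` norm tends to `0` as `r → ∞` by dominated
convergence. For large `r` the conjugate of `Id + Υ` is therefore a perturbation of the identity
of norm less than one, and the Neumann series inverts it.
-/

open ContinuousLinearMap (lsmul)
open scoped Convolution ENNReal

section Volterra

variable {E : Type*} [NormedAddCommGroup E] [NormedSpace ℝ E] {b t : ℝ} {k : ℝ → ℝ} {x y : ℝ → E}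

/-- The Volterra convolution operator with kernel `k` and base point `0`, acting on functions;
the fractional integral `I^α` is the case `k u = u ^ (α - 1) / Γ(α)`. -/
noncomputable def volterra (k : ℝ → ℝ) (x : ℝ → E) (t : ℝ) : E :=
  ∫ s in (0 : ℝ)..t, k (t - s) • x s

lemma indicator_sub_smul_indicator (ht : t ∈ Icc 0 b) (k : ℝ → ℝ) (x : ℝ → E) :
    (fun s ↦ (Icc 0 b).indicator k (t - s) • (Icc 0 b).indicator x s) =
      (Icc 0 t).indicator fun s ↦ k (t - s) • x s := by
  ext s
  have hmem : s ∈ Icc 0 t ↔ t - s ∈ Icc 0 b ∧ s ∈ Icc 0 b := by grind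
  by_cases hts : t - s ∈ Icc 0 b <;> by_cases hs : s ∈ Icc 0 b <;> simp [indicator, hmem, hts, hs]

lemma volterra_eq_convolution (ht : t ∈ Icc 0 b) (k : ℝ → ℝ) (x : ℝ → E) :
    volterra k x t = ((Icc 0 b).indicator k ⋆[lsmul ℝ ℝ] (Icc 0 b).indicator x) t := by
  rw [convolution_lsmul_swap, indicator_sub_smul_indicator ht, integral_indicator measurableSet_Icc,
    integral_Icc_eq_integral_Ioc, volterra, intervalIntegral.integral_of_le ht.1]

lemma integrableOn_volterra (hk : IntegrableOn k (Icc 0 b)) (hx : IntegrableOn x (Icc 0 b)) :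
    IntegrableOn (volterra k x) (Icc 0 b) :=
  ((hk.integrable_indicator measurableSet_Icc).integrable_convolution (lsmul ℝ ℝ)
    (hx.integrable_indicator measurableSet_Icc)).integrableOn.congr_fun
    (fun _ ht ↦ (volterra_eq_convolution ht k x).symm) measurableSet_Icc

lemma ae_intervalIntegrable_sub_smul (hk : IntegrableOn k (Icc 0 b))
    (hx : IntegrableOn x (Icc 0 b)) :
    ∀ᵐ t ∂volume.restrict (Icc 0 b), IntervalIntegrable (fun s ↦ k (t - s) • x s) volume 0 t := by
  have hconv := (hk.integrable_indicator measurableSet_Icc).ae_convolution_exists (lsmul ℝ ℝ)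
    (hx.integrable_indicator measurableSet_Icc)
  filter_upwards [ae_restrict_of_ae hconv, ae_restrict_mem measurableSet_Icc] with t hconv ht
  have hint : Integrable ((Icc 0 t).indicator fun s ↦ k (t - s) • x s) := by
    rw [← indicator_sub_smul_indicator ht]
    exact hconv.integrable_swap
  rw [intervalIntegrable_iff_integrableOn_Icc_of_le ht.1]
  exact (integrable_indicator_iff measurableSet_Icc).1 hint

lemma norm_volterra_le (ht : 0 ≤ t) (k : ℝ → ℝ) (x : ℝ → E) :
    ‖volterra k x t‖ ≤ volterra (‖k ·‖) (‖x ·‖) t := by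
  simpa only [volterra, norm_smul, smul_eq_mul] using
    intervalIntegral.norm_integral_le_integral_norm (f := fun s ↦ k (t - s) • x s) ht

lemma setIntegral_norm_volterra_le (hk : IntegrableOn k (Icc 0 b))
    (hx : IntegrableOn x (Icc 0 b)) :
    ∫ t in Icc 0 b, ‖volterra k x t‖ ≤ (∫ u in Icc 0 b, ‖k u‖) * ∫ s in Icc 0 b, ‖x s‖ := by
  set K := (Icc 0 b).indicator (‖k ·‖)
  set X := (Icc 0 b).indicator (‖x ·‖)
  have hK : Integrable K := (integrable_indicator_iff measurableSet_Icc).2 hk.norm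
  have hX : Integrable X := (integrable_indicator_iff measurableSet_Icc).2 hx.norm
  have hconv : Integrable (K ⋆[lsmul ℝ ℝ] X) := hK.integrable_convolution (lsmul ℝ ℝ) hX
  have hconv_nonneg (t : ℝ) : 0 ≤ (K ⋆[lsmul ℝ ℝ] X) t :=
    integral_nonneg fun s ↦ mul_nonneg (indicator_nonneg (fun _ _ ↦ norm_nonneg _) _)
      (indicator_nonneg (fun _ _ ↦ norm_nonneg _) _)
  calc ∫ t in Icc 0 b, ‖volterra k x t‖
      ≤ ∫ t in Icc 0 b, (K ⋆[lsmul ℝ ℝ] X) t :=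
        setIntegral_mono_on (integrableOn_volterra hk hx).norm hconv.integrableOn measurableSet_Icc
          fun t ht ↦ (norm_volterra_le ht.1 k x).trans_eq (volterra_eq_convolution ht _ _)
    _ ≤ ∫ t, (K ⋆[lsmul ℝ ℝ] X) t := setIntegral_le_integral hconv (.of_forall hconv_nonneg)
    _ = (∫ u in Icc 0 b, ‖k u‖) * ∫ s in Icc 0 b, ‖x s‖ := by
        rw [integral_convolution (lsmul ℝ ℝ) hK hX, integral_indicator measurableSet_Icc,
          integral_indicator measurableSet_Icc, ContinuousLinearMap.lsmul_apply, smul_eq_mul]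

lemma volterra_congr_ae (k : ℝ → ℝ) (hxy : x =ᵐ[volume.restrict (Icc 0 b)] y) :
    volterra k x =ᵐ[volume.restrict (Icc 0 b)] volterra k y := by
  filter_upwards [ae_restrict_mem measurableSet_Icc] with t ht
  refine intervalIntegral.integral_congr_ae_restrict ?_
  have hsub : uIoc 0 t ⊆ Icc 0 b := by
    rw [uIoc_of_le ht.1]
    exact Ioc_subset_Icc_self.trans (Icc_subset_Icc_right ht.2)
  filter_upwards [ae_restrict_of_ae_restrict_of_subset hsub hxy] with s hs
  rw [hs]

lemma volterra_add_ae (hk : IntegrableOn k (Icc 0 b)) (hx : IntegrableOn x (Icc 0 b))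
    (hy : IntegrableOn y (Icc 0 b)) :
    volterra k (x + y) =ᵐ[volume.restrict (Icc 0 b)] volterra k x + volterra k y := by
  filter_upwards [ae_intervalIntegrable_sub_smul hk hx,
    ae_intervalIntegrable_sub_smul hk hy] with t hxt hyt
  simp only [volterra, Pi.add_apply, smul_add, intervalIntegral.integral_add hxt hyt]

lemma volterra_const_smul (k : ℝ → ℝ) (c : ℝ) (x : ℝ → E) :
    volterra k (c • x) = c • volterra k x := by
  ext t
  simp only [volterra, Pi.smul_apply, smul_comm _ c, intervalIntegral.integral_smul]

lemma volterra_sum_kernel_ae {ι : Type*} [Fintype ι] {k : ι → ℝ → ℝ}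
    (hk : ∀ i, IntegrableOn (k i) (Icc 0 b)) (hx : IntegrableOn x (Icc 0 b)) :
    volterra (fun u ↦ ∑ i, k i u) x =ᵐ[volume.restrict (Icc 0 b)]
      fun t ↦ ∑ i, volterra (k i) x t := by
  filter_upwards [ae_all_iff.2 fun i ↦ ae_intervalIntegrable_sub_smul (hk i) hx] with t ht
  simp only [volterra, Finset.sum_smul]
  exact intervalIntegral.integral_finsetSum fun i _ ↦ ht i

end Volterra

section ExpDamp

variable {E : Type*} [NormedAddCommGroup E] [NormedSpace ℝ E] {b : ℝ}

/-- The exponentially damped function `u ↦ exp (-r u) f u`, for Volterra operators the weight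
of Bielecki's renorming. -/
noncomputable def expDamp (r : ℝ) (f : ℝ → E) (u : ℝ) : E := Real.exp (-r * u) • f u

lemma expDamp_expDamp_neg (r : ℝ) (f : ℝ → E) : expDamp r (expDamp (-r) f) = f := by
  ext u
  simp [expDamp, smul_smul, ← Real.exp_add]

lemma expDamp_volterra (r : ℝ) (k : ℝ → ℝ) (x : ℝ → E) :
    expDamp r (volterra k x) = volterra (expDamp r k) (expDamp r x) := by
  ext t
  simp only [expDamp, volterra, ← intervalIntegral.integral_smul, smul_eq_mul, smul_smul]
  congr! 3 with s
  rw [show -r * t = -r * (t - s) + -r * s by ring, Real.exp_add]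
  ring

lemma integrableOn_expDamp (r : ℝ) {f : ℝ → E} (hf : IntegrableOn f (Icc 0 b)) :
    IntegrableOn (expDamp r f) (Icc 0 b) :=
  hf.continuousOn_smul (by fun_prop) isCompact_Icc

lemma norm_expDamp_le {r u : ℝ} (hr : 0 ≤ r) (hu : 0 ≤ u) (f : ℝ → E) :
    ‖expDamp r f u‖ ≤ ‖f u‖ := by
  rw [expDamp, norm_smul, Real.norm_eq_abs, Real.abs_exp]
  exact mul_le_of_le_one_left (norm_nonneg _) (Real.exp_le_one_iff.2 (by nlinarith))

lemma tendsto_expDamp_atTop {u : ℝ} (hu : 0 < u) (f : ℝ → E) :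
    Tendsto (fun r ↦ expDamp r f u) atTop (𝓝 0) := by
  have hexp : Tendsto (fun r : ℝ ↦ Real.exp (-r * u)) atTop (𝓝 0) :=
    Real.tendsto_exp_atBot.comp (tendsto_neg_atTop_atBot.atBot_mul_const hu)
  simpa only [expDamp, zero_smul] using hexp.smul_const (f u)

lemma tendsto_setIntegral_norm_expDamp {f : ℝ → E} (hf : IntegrableOn f (Icc 0 b)) :
    Tendsto (fun r : ℝ ↦ ∫ u in Icc 0 b, ‖expDamp r f u‖) atTop (𝓝 0) := by
  simp only [integral_Icc_eq_integral_Ioc]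
  suffices Tendsto (fun r : ℝ ↦ ∫ u in Ioc 0 b, ‖expDamp r f u‖) atTop
      (𝓝 (∫ _ in Ioc 0 b, (0 : ℝ))) by simpa only [integral_zero] using this
  refine tendsto_integral_filter_of_dominated_convergence (‖f ·‖)
    (.of_forall fun r ↦ ?_) ?_ (hf.mono_set Ioc_subset_Icc_self).norm ?_
  · exact ((integrableOn_expDamp r hf).mono_set Ioc_subset_Icc_self).norm.aestronglyMeasurable
  · filter_upwards [eventually_ge_atTop 0] with r hr
    filter_upwards [ae_restrict_mem measurableSet_Ioc] with u hu
    rw [norm_norm]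
    exact norm_expDamp_le hr hu.1.le f
  · filter_upwards [ae_restrict_mem measurableSet_Ioc] with u hu
    exact tendsto_zero_iff_norm_tendsto_zero.1 (tendsto_expDamp_atTop hu.1 f)

end ExpDamp

/-- The Banach space `L¹([0, b]; E)`. -/
abbrev IccL1 (E : Type*) [NormedAddCommGroup E] (b : ℝ) : Type _ :=
  Lp E 1 (volume.restrict (Icc (0 : ℝ) b))

lemma memLp_top_restrict_of_isCompact {X E : Type*} [TopologicalSpace X] [T2Space X]
    [MeasurableSpace X] [OpensMeasurableSpace X] [NormedAddCommGroup E]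
    {μ : Measure X} {K : Set X} {f : X → E} (hf : ContinuousOn f K) (hK : IsCompact K) :
    MemLp f ∞ (μ.restrict K) := by
  obtain ⟨C, hC⟩ := hK.exists_bound_of_continuousOn hf
  exact memLp_top_of_bound (hf.aestronglyMeasurable_of_isCompact hK hK.measurableSet) C
    ((ae_restrict_mem hK.measurableSet).mono hC)

section IccL1

variable {E : Type*} [NormedAddCommGroup E] [NormedSpace ℝ E] {b : ℝ} {k : ℝ → ℝ}

/-- The Volterra convolution operator with integrable kernel `k`, as a linear endomorphism of
`L¹([0, b]; E)`. -/
noncomputable def volterraL1ₗ (hk : IntegrableOn k (Icc 0 b)) : IccL1 E b →ₗ[ℝ] IccL1 E b where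
  toFun x := (integrableOn_volterra hk (L1.integrable_coeFn x)).integrable.toL1 _
  map_add' x y := by
    rw [← Integrable.toL1_add, Integrable.toL1_eq_toL1_iff]
    exact (volterra_congr_ae k (Lp.coeFn_add x y)).trans
      (volterra_add_ae hk (L1.integrable_coeFn x) (L1.integrable_coeFn y))
  map_smul' c x := by
    rw [RingHom.id_apply, ← Integrable.toL1_smul', Integrable.toL1_eq_toL1_iff,
      ← volterra_const_smul]
    exact volterra_congr_ae k (Lp.coeFn_smul c x)

lemma norm_volterraL1ₗ_apply_le (hk : IntegrableOn k (Icc 0 b)) (x : IccL1 E b) :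
    ‖volterraL1ₗ hk x‖ ≤ (∫ u in Icc 0 b, ‖k u‖) * ‖x‖ := by
  have hvol := integrableOn_volterra hk (L1.integrable_coeFn x)
  rw [L1.norm_eq_integral_norm x]
  exact (L1.norm_of_fun_eq_integral_norm hvol.integrable).trans_le
    (setIntegral_norm_volterra_le hk (L1.integrable_coeFn x))

/-- The Volterra convolution operator with integrable kernel `k`, as a bounded operator on
`L¹([0, b]; E)`. -/
noncomputable def volterraL1 (hk : IntegrableOn k (Icc 0 b)) : IccL1 E b →L[ℝ] IccL1 E b :=
  (volterraL1ₗ hk).mkContinuous _ (norm_volterraL1ₗ_apply_le hk)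

lemma coeFn_volterraL1 (hk : IntegrableOn k (Icc 0 b)) (x : IccL1 E b) :
    volterraL1 hk x =ᵐ[volume.restrict (Icc 0 b)] volterra k x :=
  (integrableOn_volterra hk (L1.integrable_coeFn x)).integrable.coeFn_toL1

lemma norm_volterraL1_le (hk : IntegrableOn k (Icc 0 b)) :
    ‖(volterraL1 hk : IccL1 E b →L[ℝ] IccL1 E b)‖ ≤ ∫ u in Icc 0 b, ‖k u‖ :=
  LinearMap.mkContinuous_norm_le _ (integral_nonneg fun _ ↦ norm_nonneg _) _

lemma memLp_top_exp_neg_mul (b r : ℝ) :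
    MemLp (fun t ↦ Real.exp (-r * t)) ∞ (volume.restrict (Icc 0 b)) :=
  memLp_top_restrict_of_isCompact (by fun_prop) isCompact_Icc

/-- Exponential damping `expDamp r` as a bounded operator on `L¹([0, b]; E)`. -/
noncomputable def expDampL1 (E : Type*) [NormedAddCommGroup E] [NormedSpace ℝ E] (b r : ℝ) :
    IccL1 E b →L[ℝ] IccL1 E b :=
  (lsmul ℝ ℝ).holderL (volume.restrict (Icc 0 b)) ∞ 1 1 (memLp_top_exp_neg_mul b r).toLp

lemma coeFn_expDampL1 (r : ℝ) (x : IccL1 E b) :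
    expDampL1 E b r x =ᵐ[volume.restrict (Icc 0 b)] expDamp r x := by
  filter_upwards [(lsmul ℝ ℝ).coeFn_holder (r := 1) (memLp_top_exp_neg_mul b r).toLp x,
    (memLp_top_exp_neg_mul b r).coeFn_toLp] with t hmul hexp
  rw [expDampL1, ContinuousLinearMap.holderL_apply_apply, hmul, hexp]
  rfl

lemma expDampL1_mul_expDampL1_neg (r : ℝ) : expDampL1 E b r * expDampL1 E b (-r) = 1 := by
  ext1 x
  refine Lp.ext ?_
  filter_upwards [coeFn_expDampL1 r (expDampL1 E b (-r) x), coeFn_expDampL1 (-r) x]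
    with t hpos hneg
  have hcancel := congrFun (expDamp_expDamp_neg r x) t
  simp only [expDamp] at hpos hneg hcancel
  rw [mul_apply_eq_comp, hpos, hneg, hcancel, one_apply_eq_self]

lemma isUnit_expDampL1 (r : ℝ) : IsUnit (expDampL1 E b r) :=
  ⟨⟨expDampL1 E b r, expDampL1 E b (-r), expDampL1_mul_expDampL1_neg r, by
    simpa only [neg_neg] using expDampL1_mul_expDampL1_neg (E := E) (b := b) (-r)⟩, rfl⟩

lemma expDampL1_mul_volterraL1 (r : ℝ) (hk : IntegrableOn k (Icc 0 b)) :
    expDampL1 E b r * volterraL1 hk =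
      volterraL1 (integrableOn_expDamp r hk) * expDampL1 E b r := by
  ext1 x
  refine Lp.ext ?_
  filter_upwards [coeFn_expDampL1 r (volterraL1 hk x), coeFn_volterraL1 hk x,
    coeFn_volterraL1 (integrableOn_expDamp r hk) (expDampL1 E b r x),
    volterra_congr_ae (expDamp r k) (coeFn_expDampL1 r x)] with t hdamp hvol hvol_damp hcongr
  rw [mul_apply_eq_comp, mul_apply_eq_comp, hdamp, hvol_damp, hcongr,
    ← expDamp_volterra, expDamp, expDamp, hvol]

lemma isUnit_one_add_volterraL1 [CompleteSpace E] (hk : IntegrableOn k (Icc 0 b)) :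
    IsUnit (1 + volterraL1 hk : IccL1 E b →L[ℝ] IccL1 E b) := by
  obtain ⟨r, hr⟩ := ((tendsto_setIntegral_norm_expDamp hk).eventually_lt_const one_pos).exists
  set M := expDampL1 E b r
  set V : IccL1 E b →L[ℝ] IccL1 E b := volterraL1 (integrableOn_expDamp r hk)
  have hV : IsUnit (1 + V) := by
    simpa only [sub_neg_eq_add] using
      isUnit_one_sub_of_norm_lt_one ((norm_neg V).trans_lt ((norm_volterraL1_le _).trans_lt hr))
  have hconj : M * (1 + volterraL1 hk) = (1 + V) * M := by
    rw [mul_add, add_mul, mul_one, one_mul, expDampL1_mul_volterraL1]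
  have hM : IsUnit M := isUnit_expDampL1 r
  rw [← hM.mul_left_iff, hconj]
  exact hV.mul hM

lemma coeFn_one_add_volterraL1_toL1 (hk : IntegrableOn k (Icc 0 b)) {x : ℝ → E}
    (hx : IntegrableOn x (Icc 0 b)) :
    (1 + volterraL1 hk : IccL1 E b →L[ℝ] IccL1 E b) (hx.integrable.toL1 x)
      =ᵐ[volume.restrict (Icc 0 b)] fun t ↦ volterra k x t + x t := by
  have hX := hx.integrable.coeFn_toL1
  set X : IccL1 E b := hx.integrable.toL1 x
  filter_upwards [Lp.coeFn_add X (volterraL1 hk X), coeFn_volterraL1 hk X, volterra_congr_ae k hX,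
    hX] with t hadd hvol hcongr hXt
  rw [add_apply, one_apply_eq_self, hadd, Pi.add_apply, hvol, hcongr, hXt, add_comm]

end IccL1

lemma exists_ae_unique_solution_of_equiv_L1 {X Y E F : Type*} [MeasurableSpace X]
    [MeasurableSpace Y] [NormedAddCommGroup E] [NormedAddCommGroup F] {μ : Measure X}
    {ν : Measure Y} (T : (X →₁[μ] E) ≃ (Y →₁[ν] F)) {Φ : (X → E) → Y → F}
    (hT : ∀ (x : X → E) (hx : Integrable x μ), T (hx.toL1 x) =ᵐ[ν] Φ x) {f : Y → F}
    (hf : Integrable f ν) :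
    ∃ x : X → E, (Integrable x μ ∧ Φ x =ᵐ[ν] f) ∧
      ∀ x' : X → E, Integrable x' μ → Φ x' =ᵐ[ν] f → x' =ᵐ[μ] x := by
  have hx := L1.integrable_coeFn (T.symm (hf.toL1 f))
  refine ⟨T.symm (hf.toL1 f), ⟨hx, ?_⟩, fun x' hx' hsol ↦ ?_⟩
  · have hTx := hT _ hx
    rw [Integrable.toL1_coeFn, T.apply_symm_apply] at hTx
    exact hTx.symm.trans hf.coeFn_toL1
  · have hTx' : T (hx'.toL1 x') = hf.toL1 f :=
      Lp.ext ((hT x' hx').trans (hsol.trans hf.coeFn_toL1.symm))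
    rw [← hTx', T.symm_apply_apply]
    exact hx'.coeFn_toL1.symm

theorem upsilon_add_id_automorphism_general {E ι : Type*} [NormedAddCommGroup E] [NormedSpace ℝ E]
    [CompleteSpace E] [Fintype ι] {b : ℝ} {k : ι → ℝ → ℝ}
    (hk : ∀ i, IntegrableOn (k i) (Icc 0 b)) :
    (∃ T : IccL1 E b ≃L[ℝ] IccL1 E b, ∀ x : IccL1 E b,
      T x =ᵐ[volume.restrict (Icc 0 b)] fun t ↦ (∑ i, volterra (k i) x t) + x t) ∧
    ∀ f : ℝ → E, IntegrableOn f (Icc 0 b) →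
      ∃ x : ℝ → E,
        (IntegrableOn x (Icc 0 b) ∧
          (fun t ↦ (∑ i, volterra (k i) x t) + x t) =ᵐ[volume.restrict (Icc 0 b)] f) ∧
        ∀ x' : ℝ → E, IntegrableOn x' (Icc 0 b) →
          (fun t ↦ (∑ i, volterra (k i) x' t) + x' t) =ᵐ[volume.restrict (Icc 0 b)] f →
          x' =ᵐ[volume.restrict (Icc 0 b)] x := by
  have hsum : IntegrableOn (fun u ↦ ∑ i, k i u) (Icc 0 b) := integrable_finsetSum _ fun i _ ↦ hk i
  obtain ⟨u, hu⟩ := isUnit_one_add_volterraL1 (E := E) hsum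
  set T : IccL1 E b ≃L[ℝ] IccL1 E b := ContinuousLinearEquiv.unitsEquiv ℝ (IccL1 E b) u
  have hT (x : ℝ → E) (hx : IntegrableOn x (Icc 0 b)) :
      T (hx.integrable.toL1 x) =ᵐ[volume.restrict (Icc 0 b)]
        fun t ↦ (∑ i, volterra (k i) x t) + x t := by
    rw [ContinuousLinearEquiv.unitsEquiv_apply, hu]
    exact (coeFn_one_add_volterraL1_toL1 hsum hx).trans
      ((volterra_sum_kernel_ae hk hx).add .rfl)
  refine ⟨⟨T, fun x ↦ ?_⟩, fun f hf ↦ exists_ae_unique_solution_of_equiv_L1 T.toEquiv hT hf⟩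
  simpa only [Integrable.toL1_coeFn] using hT x (L1.integrable_coeFn x)

lemma integrableOn_const_mul_rpow (b c : ℝ) {α : ℝ} (hα : 0 < α) :
    IntegrableOn (fun u ↦ c * u ^ (α - 1)) (Icc 0 b) := by
  have hrpow : IntervalIntegrable (fun u ↦ u ^ (α - 1)) volume 0 b :=
    intervalIntegral.intervalIntegrable_rpow' (by linarith)
  rw [integrableOn_Icc_iff_integrableOn_Ioc]
  exact (hrpow.const_mul c).1

lemma mul_RL_eq_volterra {α : ℝ} (hα : α ≠ 0) (c : ℝ) (x : ℝ → ℝ) (t : ℝ) :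
    c * RL α x t = volterra (fun u ↦ c * (1 / Real.Gamma α) * u ^ (α - 1)) x t := by
  simp only [RL, if_neg hα, volterra, smul_eq_mul, mul_assoc, intervalIntegral.integral_const_mul]

/-- `Υ + Id` (with `Υ = c_n I^{α_n} + ⋯ + c_1 I^{α_1}`) is an invertible bounded linear map
from the Banach space `L¹[0,b]` to itself with bounded inverse (a continuous linear
equivalence); in particular, for every `f ∈ L¹[0,b]` the fractional integral equation
`(Υ + Id) x = f` has exactly one solution `x ∈ L¹[0,b]`. -/
theorem upsilon_add_id_automorphism (b : ℝ) (hb : 0 < b) (n : ℕ) (α c : Fin n → ℝ)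
    (hmono : StrictMono α) (hpos : ∀ i, 0 < α i) :
    (∃ T : Lp ℝ 1 (volume.restrict (Icc (0:ℝ) b)) ≃L[ℝ] Lp ℝ 1 (volume.restrict (Icc (0:ℝ) b)),
      ∀ x : Lp ℝ 1 (volume.restrict (Icc (0:ℝ) b)),
        (T x : ℝ → ℝ) =ᵐ[volume.restrict (Icc (0:ℝ) b)]
          fun t => (∑ i, c i * RL (α i) x t) + x t) ∧
    ∀ f : ℝ → ℝ, IntegrableOn f (Set.Icc 0 b) volume →
      ∃ x : ℝ → ℝ,
        (IntegrableOn x (Set.Icc 0 b) volume ∧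
          (fun t => (∑ i, c i * RL (α i) x t) + x t)
            =ᵐ[volume.restrict (Set.Icc 0 b)] f) ∧
        ∀ x' : ℝ → ℝ, IntegrableOn x' (Set.Icc 0 b) volume →
          (fun t => (∑ i, c i * RL (α i) x' t) + x' t)
            =ᵐ[volume.restrict (Set.Icc 0 b)] f →
          x' =ᵐ[volume.restrict (Set.Icc 0 b)] x := by
  simpa only [mul_RL_eq_volterra (hpos _).ne'] using
    upsilon_add_id_automorphism_general fun i ↦ integrableOn_const_mul_rpow b _ (hpos i)
end
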